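/- arXiv:1203.0208 — 2 statements merged into one kernel-verified Lean document; each statement's English description precedes it below -/
import Mathlib

section
/- Let X ⊂ P^N be a non-degenerate smooth projective variety of dimension n. Then df(X) + δ(X) ≤ n, and if SX ≠ P^N then df(X) + δ(X) ≤ n − 1. -/
/-!
Let `CX ⊂ ℂ^{N+1}` be the cone over `X` and `c = N - n`. The proof computes with a generic point `x`
of `CX` and a generic conormal vector `h = ∑ t_a dp_a(x)`, where `p_1, …, p_c` are equations of `CX`
with independent differentials at `x` and the `t_a` are further indeterminates. The point `h` lies on
the cone over the dual variety, so the transcendence degree `r` of `ℂ(h)` is at most `n* + 1`.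

*Contact loci are linear* (`exists_contact`). One has `∑ h_i dx_i = 0`, and `∑ h_i x_i = 0` by Euler's
relation. Differentiating the second relation along `r` independent coordinates of `h` shows that `x`
satisfies `r` independent linear equations with coefficients algebraic over `ℂ(h)`, and a count of
transcendence degrees shows that it is a generic solution. Specializing the hyperplane `h` along a
homomorphism `φ` gives a linear subspace `L_φ ⊂ CX` of dimension `N + 1 - r` (`Contact.lin_mem`).

*The projection of `X` from `L_φ` is generically finite* (`Contact.coord_mem_acl`). Otherwise some
place of the function field is finite on the coordinates of the projection while the point itself
moves to `L_φ`. The first-order Taylor expansion there gives a tangent vector of `CX` at a nonzero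
point of `L_φ`, and smoothness puts it into the hyperplane `φ(h)` (`Contact.tangent_hyperplane`). This
contradicts non-degeneracy, by which `φ(h)` does not vanish at `x`.

Hence the join of `X` with `L_φ` has a cone of dimension `n + 1 + (N + 1 - r)`
(`Contact.le_adim_joinHom`). It lies in the cone over `SX`, since `L_φ ⊂ CX`
(`Contact.zeroLocus_joinHom`), so `n + 1 + N + 1 - (n* + 1) ≤ s + 1`, which is the first inequality.

If equality holds, then the join with each `L_φ` is all of `SX`, because `SX` is irreducible
(`zIrred_zClosure_add`, `eq_of_adim_le`). The cone over `SX` is then invariant under translation by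
every `L_φ`. These subspaces together span the ambient space, since `X` is non-degenerate and a linear
form vanishing on all of them vanishes at `x` (`Contact.iSup_range_linMap`); hence `SX = ℙ^N`.
-/

open MvPolynomial

noncomputable section

/-- Affine space `ℂ^{N+1}`. -/
abbrev Aff (N : ℕ) := Fin (N + 1) → ℂ

/-- Projective `N`-space over `ℂ`. -/
abbrev Proj (N : ℕ) := Projectivization ℂ (Aff N)

/-- Zariski-closed subsets of affine space: common zero loci of polynomials. -/
def zClosed {N : ℕ} (V : Set (Aff N)) : Prop :=
  ∃ S : Set (MvPolynomial (Fin (N + 1)) ℂ), V = {x | ∀ p ∈ S, eval x p = 0}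

/-- Zariski closure in affine space. -/
def zClosure {N : ℕ} (V : Set (Aff N)) : Set (Aff N) :=
  ⋂₀ {C | zClosed C ∧ V ⊆ C}

/-- Irreducibility of a subset of affine space w.r.t. the Zariski topology. -/
def zIrred {N : ℕ} (V : Set (Aff N)) : Prop :=
  V.Nonempty ∧ ∀ C₁ C₂ : Set (Aff N), zClosed C₁ → zClosed C₂ → V ⊆ C₁ ∪ C₂ →
    V ⊆ C₁ ∨ V ⊆ C₂

/-- Dimension of a subset of affine space: Krull dimension of the poset of
irreducible Zariski-closed subsets contained in it. -/
def adim {N : ℕ} (V : Set (Aff N)) : WithBot ℕ∞ :=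
  Order.krullDim {W : Set (Aff N) // zClosed W ∧ zIrred W ∧ W ⊆ V}

/-- The affine cone over a set of projective points. -/
def cone {N : ℕ} (X : Set (Proj N)) : Set (Aff N) :=
  {v | ∃ hv : v ≠ 0, Projectivization.mk ℂ v hv ∈ X} ∪ {0}

/-- A projectively closed set. -/
def pClosed {N : ℕ} (X : Set (Proj N)) : Prop := zClosed (cone X)

/-- Projective Zariski closure. -/
def pClosure {N : ℕ} (X : Set (Proj N)) : Set (Proj N) :=
  {z | z.rep ∈ zClosure (cone X)}

/-- The vanishing ideal (as a set of polynomials) of a subset of `ℂ^ι`. -/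
def vanishSet {ι : Type} [Fintype ι] (V : Set (ι → ℂ)) : Set (MvPolynomial ι ℂ) :=
  {p | ∀ v ∈ V, eval v p = 0}

/-- The differential of a polynomial at a point, as a linear form. -/
def polyDiff {ι : Type} [Fintype ι] (v : ι → ℂ) (p : MvPolynomial ι ℂ) :
    (ι → ℂ) →ₗ[ℂ] ℂ :=
  ∑ i, eval v (pderiv i p) • LinearMap.proj i

/-- The (embedded, affine) Zariski tangent space of `V` at `v`. -/
def tangentAt {ι : Type} [Fintype ι] (V : Set (ι → ℂ)) (v : ι → ℂ) :
    Submodule ℂ (ι → ℂ) :=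
  ⨅ p ∈ vanishSet V, LinearMap.ker (polyDiff v p)

/-- The affine cone over the embedded projective tangent space of `X` at `x`. -/
def projTangent {N : ℕ} (X : Set (Proj N)) (x : Proj N) : Submodule ℂ (Aff N) :=
  tangentAt (cone X) x.rep

/-- The embedded projective tangent space `T_x X ⊆ ℙ^N` as a set of points. -/
def tangentSet {N : ℕ} (X : Set (Proj N)) (x : Proj N) : Set (Proj N) :=
  {z | z.submodule ≤ projTangent X x}

/-- `X` is a closed irreducible smooth projective variety of dimension `n`
(the affine cone has dimension `n+1`, and every embedded tangent space has
linear dimension `n+1`). -/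
def SmoothVariety {N : ℕ} (X : Set (Proj N)) (n : ℕ) : Prop :=
  pClosed X ∧ zIrred (cone X) ∧ adim (cone X) = ((n + 1 : ℕ) : WithBot ℕ∞) ∧
    ∀ x ∈ X, Module.finrank ℂ (projTangent X x) = n + 1

/-- Non-degeneracy: `X` is contained in no hyperplane. -/
def Nondeg {N : ℕ} (X : Set (Proj N)) : Prop :=
  Submodule.span ℂ (cone X) = ⊤

/-- The projective line through two points (all of `ℙ^N` if they coincide... it
is the projectivization of the span of the two representatives). -/
def pline {N : ℕ} (x y : Proj N) : Set (Proj N) :=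
  {z | z.submodule ≤ x.submodule ⊔ y.submodule}

/-- The relative secant (join) variety `S(Y,X)`: closure of the union of the
lines joining a point of `Y` to a distinct point of `X`. -/
def joinVar {N : ℕ} (Y X : Set (Proj N)) : Set (Proj N) :=
  pClosure {z | ∃ y ∈ Y, ∃ x ∈ X, y ≠ x ∧ z ∈ pline y x}

/-- The secant variety `SX`. -/
def secantVar {N : ℕ} (X : Set (Proj N)) : Set (Proj N) := joinVar X X

/-- The relative tangent variety `T(Y,X) = ⋃_{y ∈ Y} T_y X`. -/
def relTangent {N : ℕ} (Y X : Set (Proj N)) : Set (Proj N) :=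
  ⋃ y ∈ Y, tangentSet X y

/-- The hyperplane (as a linear subspace of `ℂ^{N+1}`) with coordinate vector `a`. -/
def hypSub {N : ℕ} (a : Aff N) : Submodule ℂ (Aff N) :=
  LinearMap.ker (∑ i, a i • (LinearMap.proj i : (Aff N) →ₗ[ℂ] ℂ))

/-- The dual variety of `X`, identified with a subvariety of `ℙ^N` via
coordinates of hyperplanes: closure of the set of hyperplanes tangent to `X`
at some point. -/
def dualVar {N : ℕ} (X : Set (Proj N)) : Set (Proj N) :=
  pClosure {h | ∃ x ∈ X, projTangent X x ≤ hypSub h.rep}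

/-- The entry locus `Σ_z` of a point `z` of the secant variety. -/
def entryLocus {N : ℕ} (X : Set (Proj N)) (z : Proj N) : Set (Proj N) :=
  pClosure {x | x ∈ X ∧ ∃ x' ∈ X, x ≠ x' ∧ z ∈ pline x x'}

/-- A scroll structure on `X ⊆ ℙ^N`: a smooth base variety `W` (of dimension
`b`, embedded in some projective space) together with a family of disjoint
linearly embedded fibres of dimension `n - b` covering `X`. -/
structure ScrollOn (N : ℕ) (X : Set (Proj N)) (n b : ℕ) where
  M : ℕ
  W : Set (Proj M)
  baseSmooth : SmoothVariety W b
  fdim : ℕ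
  dim_eq : n = b + fdim
  Fsub : Proj M → Submodule ℂ (Aff N)
  fib_rank : ∀ w ∈ W, Module.finrank ℂ (Fsub w) = fdim + 1
  cover : X = ⋃ w ∈ W, {z : Proj N | z.submodule ≤ Fsub w}
  disjoint : ∀ w ∈ W, ∀ w' ∈ W, w ≠ w' →
    ∀ z : Proj N, z.submodule ≤ Fsub w → z.submodule ≤ Fsub w' → False

/-- The fibre of a scroll over a base point. -/
def ScrollOn.fib {N : ℕ} {X : Set (Proj N)} {n b : ℕ} (S : ScrollOn N X n b)
    (w : Proj S.M) : Set (Proj N) :=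
  {z | z.submodule ≤ S.Fsub w}

/-- The coordinate vector of the Segre product of two vectors. -/
def segreVec (a b : ℕ) (y : Fin a → ℂ) (w : Fin b → ℂ) : Fin a × Fin b → ℂ :=
  fun p => y p.1 * w p.2

/-- `X` is (projectively equivalent to) the Segre embedding
`ℙ^{a-1} × ℙ^{b-1} ⊆ ℙ^{ab-1}`. -/
def IsSegre {N : ℕ} (a b : ℕ) (X : Set (Proj N)) : Prop :=
  ∃ e : (Fin a × Fin b → ℂ) ≃ₗ[ℂ] (Aff N),
    X = {z | ∃ y : Fin a → ℂ, ∃ w : Fin b → ℂ,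
      z.submodule = Submodule.span ℂ {e (segreVec a b y w)}}

/-- `X` is an isomorphic projection of the Segre embedding
`ℙ^{a-1} × ℙ^{b-1}`: the image of the Segre variety under a linear projection
which is injective on points and on embedded tangent spaces of the Segre. -/
def IsProjectedSegre {N : ℕ} (a b : ℕ) (X : Set (Proj N)) : Prop :=
  ∃ L : (Fin a × Fin b → ℂ) →ₗ[ℂ] (Aff N),
    (∀ y w, segreVec a b y w ≠ 0 → L (segreVec a b y w) ≠ 0) ∧
    (∀ y w y' w', segreVec a b y w ≠ 0 → segreVec a b y' w' ≠ 0 →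
      Submodule.span ℂ {L (segreVec a b y w)} =
        Submodule.span ℂ {L (segreVec a b y' w')} →
      Submodule.span ℂ {segreVec a b y w} =
        Submodule.span ℂ {segreVec a b y' w'}) ∧
    (∀ y w, segreVec a b y w ≠ 0 →
      Disjoint
        (tangentAt {v | ∃ y' w', v = segreVec a b y' w'} (segreVec a b y w))
        (LinearMap.ker L)) ∧
    X = {z | ∃ y w, segreVec a b y w ≠ 0 ∧
      z.submodule = Submodule.span ℂ {L (segreVec a b y w)}}

end
noncomputable section

/-- The quadratic Veronese coordinates of a vector in `ℂ³`. -/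
def veroQ (y : Fin 3 → ℂ) : Fin 6 → ℂ :=
  ![y 0 * y 0, y 0 * y 1, y 0 * y 2, y 1 * y 1, y 1 * y 2, y 2 * y 2]

/-- `X` is (projectively equivalent to) the Veronese surface in `ℙ⁵`. -/
def IsVeroneseSurface {N : ℕ} (X : Set (Proj N)) : Prop :=
  ∃ h : N + 1 = 6, ∃ g : (Aff N) ≃ₗ[ℂ] (Aff N),
    X = {z | ∃ y : Fin 3 → ℂ, y ≠ 0 ∧
      z.submodule = Submodule.span ℂ {g fun i => veroQ y (Fin.cast h i)}}

/-- The coordinates of a pure spinor: `(1, x_{ij}, Pf_i(x))` for a skew matrix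
with upper entries `x i j` (`i < j`); the affine parametrization of the
10-dimensional spinor variety `S₄ ⊆ ℙ^{15}`. -/
def spinVec (x : Fin 5 → Fin 5 → ℂ) : Fin 16 → ℂ :=
  ![1, x 0 1, x 0 2, x 0 3, x 0 4, x 1 2, x 1 3, x 1 4, x 2 3, x 2 4, x 3 4,
    x 1 2 * x 3 4 - x 1 3 * x 2 4 + x 1 4 * x 2 3,
    x 0 2 * x 3 4 - x 0 3 * x 2 4 + x 0 4 * x 2 3,
    x 0 1 * x 3 4 - x 0 3 * x 1 4 + x 0 4 * x 1 3,
    x 0 1 * x 2 4 - x 0 2 * x 1 4 + x 0 4 * x 1 2,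
    x 0 1 * x 2 3 - x 0 2 * x 1 3 + x 0 3 * x 1 2]

/-- `X` is (projectively equivalent to) the 10-dimensional spinor variety
`S₄ ⊆ ℙ^{15}`. -/
def IsSpinorVariety {N : ℕ} (X : Set (Proj N)) : Prop :=
  ∃ e : (Fin 16 → ℂ) ≃ₗ[ℂ] (Aff N),
    X = pClosure {z | ∃ x : Fin 5 → Fin 5 → ℂ,
      z.submodule = Submodule.span ℂ {e (spinVec x)}}

/-- The vanishing ideal of a subset of affine space. -/
def vanishIdeal {N : ℕ} (V : Set (Aff N)) : Ideal (MvPolynomial (Fin (N + 1)) ℂ) where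
  carrier := vanishSet V
  add_mem' := by intro a b ha hb v hv; simp [vanishSet] at *; simp [ha v hv, hb v hv]
  zero_mem' := by intro v hv; simp
  smul_mem' := by intro c a ha v hv; simp [vanishSet] at *; simp [ha v hv]

/-- Saturation of a homogeneous ideal with respect to the irrelevant ideal. -/
def satIdeal {N : ℕ} (J : Ideal (MvPolynomial (Fin (N + 1)) ℂ)) :
    Ideal (MvPolynomial (Fin (N + 1)) ℂ) where
  carrier := {p | ∃ k : ℕ, ∀ i : Fin (N + 1), (X i) ^ k * p ∈ J}
  zero_mem' := ⟨0, fun i => by simp⟩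
  add_mem' := by
    rintro a b ⟨k, hk⟩ ⟨l, hl⟩
    refine ⟨k + l, fun i => ?_⟩
    have h : (X i : MvPolynomial (Fin (N + 1)) ℂ) ^ (k + l) * (a + b) =
        (X i) ^ l * ((X i) ^ k * a) + (X i) ^ k * ((X i) ^ l * b) := by ring
    rw [h]
    exact J.add_mem (J.mul_mem_left _ (hk i)) (J.mul_mem_left _ (hl i))
  smul_mem' := by
    rintro c a ⟨k, hk⟩
    refine ⟨k, fun i => ?_⟩
    have h : (X i : MvPolynomial (Fin (N + 1)) ℂ) ^ k * (c • a) =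
        c * ((X i) ^ k * a) := by rw [smul_eq_mul]; ring
    rw [h]
    exact J.mul_mem_left _ (hk i)

/-- The projective scheme `Proj` of the quotient by `J` is normal: every
localization at a prime not containing the irrelevant ideal is a normal
domain. -/
def ProjNormal {N : ℕ} (J : Ideal (MvPolynomial (Fin (N + 1)) ℂ)) : Prop :=
  ∀ P : Ideal (MvPolynomial (Fin (N + 1)) ℂ ⧸ J), ∀ hP : P.IsPrime,
    ¬ (Ideal.map (Ideal.Quotient.mk J)
        (Ideal.span (Set.range MvPolynomial.X)) ≤ P) →
      IsDomain (@Localization.AtPrime _ _ P hP) ∧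
      IsIntegrallyClosed (@Localization.AtPrime _ _ P hP)

/-- Data describing an algebraic line bundle on `X ⊆ ℙ^N` by a covering of
`X` by complements of closed sets and degree-zero rational transition
functions satisfying the cocycle condition on `X`. -/
structure LineBundleData (N : ℕ) (X : Set (Proj N)) where
  ι : Type
  Z : ι → Set (Aff N)
  Zclosed : ∀ i, zClosed (Z i)
  covers : ∀ v ∈ cone X, v ≠ 0 → ∃ i, v ∉ Z i
  num : ι → ι → MvPolynomial (Fin (N + 1)) ℂ
  den : ι → ι → MvPolynomial (Fin (N + 1)) ℂ
  deg : ι → ι → ℕ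
  num_hom : ∀ i j, num i j ∈ homogeneousSubmodule (Fin (N + 1)) ℂ (deg i j)
  den_hom : ∀ i j, den i j ∈ homogeneousSubmodule (Fin (N + 1)) ℂ (deg i j)
  invertible : ∀ i j, ∀ v ∈ cone X, v ∉ Z i → v ∉ Z j →
    eval v (num i j) ≠ 0 ∧ eval v (den i j) ≠ 0
  cocycle : ∀ i j k, ∀ v ∈ cone X, v ∉ Z i → v ∉ Z j → v ∉ Z k →
    eval v (num i j) * eval v (num j k) * eval v (den i k) =
      eval v (num i k) * eval v (den i j) * eval v (den j k)

/-- The line bundle `L` is isomorphic to the `k`-th tensor power of `G`: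
on the common refinement of the two coverings, the transition functions of
`L` and the `k`-th power of those of `G` differ by a coboundary of invertible
degree-zero rational functions. -/
def PicPowerIso {N : ℕ} {X : Set (Proj N)} (L G : LineBundleData N X) (k : ℤ) : Prop :=
  ∃ a : L.ι × G.ι → MvPolynomial (Fin (N + 1)) ℂ,
  ∃ b : L.ι × G.ι → MvPolynomial (Fin (N + 1)) ℂ,
  ∃ d : L.ι × G.ι → ℕ,
    (∀ r, a r ∈ homogeneousSubmodule (Fin (N + 1)) ℂ (d r)) ∧
    (∀ r, b r ∈ homogeneousSubmodule (Fin (N + 1)) ℂ (d r)) ∧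
    (∀ i p, ∀ v ∈ cone X, v ∉ L.Z i → v ∉ G.Z p →
      eval v (a (i, p)) ≠ 0 ∧ eval v (b (i, p)) ≠ 0) ∧
    (∀ i j p q, ∀ v ∈ cone X, v ∉ L.Z i → v ∉ L.Z j → v ∉ G.Z p → v ∉ G.Z q →
      eval v (L.num i j) * eval v (b (i, p)) * eval v (a (j, q)) *
          eval v (G.den p q) ^ k.toNat * eval v (G.num p q) ^ (-k).toNat =
        eval v (L.den i j) * eval v (a (i, p)) * eval v (b (j, q)) *
          eval v (G.num p q) ^ k.toNat * eval v (G.den p q) ^ (-k).toNat)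

/-- The Picard group of `X` is cyclic: there is a line bundle of which every
line bundle is a tensor power, up to isomorphism. -/
def PicCyclic {N : ℕ} (X : Set (Proj N)) : Prop :=
  ∃ G : LineBundleData N X, ∀ L : LineBundleData N X, ∃ k : ℤ, PicPowerIso L G k

/-- `X` can be isomorphically projected into `ℙ^M`: there is a linear
projection which is injective on the points of `X` and on its embedded
tangent spaces. -/
def IsoProjectableTo {N : ℕ} (X : Set (Proj N)) (M : ℕ) : Prop :=
  ∃ π : (Aff N) →ₗ[ℂ] (Aff M),
    (∀ v ∈ cone X, v ≠ 0 → π v ≠ 0) ∧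
    (∀ v ∈ cone X, ∀ w ∈ cone X, v ≠ 0 → w ≠ 0 →
      Submodule.span ℂ {π v} = Submodule.span ℂ {π w} →
      Submodule.span ℂ {v} = Submodule.span ℂ {w}) ∧
    (∀ x ∈ X, projTangent X x ⊓ LinearMap.ker π = ⊥)

end

/-! ### Derivations of field extensions -/

namespace DefectSum

/-- A derivation may be prescribed freely on a transcendence basis: the extension over the purely
transcendental subfield is separable algebraic, hence formally étale. -/
theorem exists_derivation_of_basis {k K ι : Type*} [Field k] [CharZero k] [Field K] [Algebra k K]
    {τ : ι → K} (hτ : IsTranscendenceBasis k τ) (g : ι → K) :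
    ∃ D : Derivation k K K, ∀ j, D (τ j) = g j := by
  classical
  have hinj : Function.Injective (aeval τ : MvPolynomial ι k →ₐ[k] K) :=
    algebraicIndependent_iff_injective_aeval.1 hτ.1
  let algM : Algebra (MvPolynomial ι k) K := (aeval τ).toRingHom.toAlgebra
  have hmap : ∀ p : MvPolynomial ι k, algebraMap (MvPolynomial ι k) K p = aeval τ p :=
    fun p => rfl
  have : IsScalarTower k (MvPolynomial ι k) K := IsScalarTower.of_algebraMap_eq (by
    intro c; rw [hmap, AlgHom.commutes])
  have : FaithfulSMul (MvPolynomial ι k) K :=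
    (faithfulSMul_iff_algebraMap_injective _ _).2 hinj
  let F := FractionRing (MvPolynomial ι k)
  let : Algebra F K := FractionRing.liftAlgebra (MvPolynomial ι k) K
  have : IsScalarTower (MvPolynomial ι k) F K := FractionRing.isScalarTower_liftAlgebra _ _
  have : CharZero F := charZero_of_injective_algebraMap (R := k)
    (FaithfulSMul.algebraMap_injective k F)
  have halg : Algebra.IsAlgebraic F K := by
    have h1 := hτ.isAlgebraic
    constructor
    intro x
    have h2 := h1.isAlgebraic x
    obtain ⟨p, hp0, hp⟩ := h2
    let e := hτ.1.aevalEquiv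
    have h3 : IsAlgebraic (MvPolynomial ι k) x := by
      refine ⟨p.map (e.symm : _ →+* MvPolynomial ι k), ?_, ?_⟩
      · rwa [Ne, Polynomial.map_eq_zero_iff]
        exact e.symm.injective
      · rw [Polynomial.aeval_def, Polynomial.eval₂_map]
        rw [Polynomial.aeval_def] at hp
        convert hp using 2
        ext y
        · simp only [RingHom.comp_apply]
          rw [hmap, ← hτ.1.algebraMap_aevalEquiv]
          exact congrArg _ (e.apply_symm_apply _)
    exact (IsFractionRing.isAlgebraic_iff (MvPolynomial ι k) F K).1 h3
  have : Algebra.IsSeparable F K := inferInstance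
  have : Algebra.FormallyEtale F K := Algebra.FormallyEtale.of_isSeparable F K
  have : Algebra.FormallyEtale (MvPolynomial ι k) F :=
    Algebra.FormallyEtale.of_isLocalization (nonZeroDivisors (MvPolynomial ι k))
  have : Algebra.FormallyEtale (MvPolynomial ι k) K :=
    Algebra.FormallyEtale.comp (MvPolynomial ι k) F K
  let d : Derivation k (MvPolynomial ι k) K := mkDerivation k g
  let E := KaehlerDifferential.tensorKaehlerEquivOfFormallyEtale k (MvPolynomial ι k) K
  let L : Ω[K⁄k] →ₗ[K] K := (d.liftKaehlerDifferential.liftBaseChange K) ∘ₗ E.symm.toLinearMap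
  refine ⟨L.compDer (KaehlerDifferential.D k K), fun j => ?_⟩
  have : τ j = algebraMap (MvPolynomial ι k) K (X j) := by rw [hmap, aeval_X]
  rw [this]
  have h2 : L.compDer (KaehlerDifferential.D k K) (algebraMap (MvPolynomial ι k) K (X j)) =
      d.liftKaehlerDifferential.liftBaseChange K
        (E.symm (KaehlerDifferential.D k K (algebraMap (MvPolynomial ι k) K (X j)))) := rfl
  rw [h2, KaehlerDifferential.tensorKaehlerEquivOfFormallyEtale_symm_D_algebraMap]
  simp [d, mkDerivation_X]

theorem exists_derivation {k K ι : Type*} [Field k] [CharZero k] [Field K] [Algebra k K]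
    {τ : ι → K} (hτ : AlgebraicIndependent k τ) (g : ι → K) :
    ∃ D : Derivation k K K, ∀ j, D (τ j) = g j := by
  classical
  obtain ⟨s, hs, hsb⟩ := exists_isTranscendenceBasis_superset
    (algebraicIndependent_subtype_range hτ.injective |>.2 hτ)
  obtain ⟨D, hD⟩ := exists_derivation_of_basis hsb
    (fun y => if h : ∃ j, τ j = y then g h.choose else 0)
  refine ⟨D, fun j => ?_⟩
  have h := hD ⟨τ j, hs ⟨j, rfl⟩⟩
  simp only at h
  rw [h]
  have hex : ∃ i, τ i = τ j := ⟨j, rfl⟩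
  rw [dif_pos hex, hτ.injective hex.choose_spec]

end DefectSum

/-! ### Krull dimension and algebraic independence -/

namespace DefectSum

/-- The Krull dimension bounds the transcendence degree from above: by Noether normalization and going
up, chains of primes of a polynomial ring lift to `B`. -/
theorem card_le_ringKrullDim {k B ι : Type} [Field k] [CommRing B] [IsDomain B] [Algebra k B]
    [Algebra.FiniteType k B] [Finite ι] {τ : ι → B} (hτ : AlgebraicIndependent k τ) :
    (Nat.card ι : WithBot ℕ∞) ≤ ringKrullDim B := by
  obtain ⟨s, g, hg, hgi⟩ := exists_integral_inj_algHom_of_fg k B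
  let := g.toRingHom.toAlgebra
  have : IsScalarTower k (MvPolynomial (Fin s) k) B := IsScalarTower.of_algebraMap_eq (by
    intro c; exact (g.commutes c).symm)
  have : Algebra.IsIntegral (MvPolynomial (Fin s) k) B := ⟨hgi⟩
  have : FaithfulSMul (MvPolynomial (Fin s) k) B := (faithfulSMul_iff_algebraMap_injective _ _).2 hg
  have h1 : Nat.card ι ≤ s := by
    have h2 := hτ.cardinalMk_le_trdeg
    have h3 := trdeg_add_eq k (MvPolynomial (Fin s) k) (A := B)
    have h4 : Algebra.trdeg (MvPolynomial (Fin s) k) B = 0 := trdeg_eq_zero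
    rw [h4, add_zero, MvPolynomial.trdeg_of_isDomain] at h3
    rw [← h3] at h2
    simp only [Cardinal.mk_fin, Cardinal.lift_natCast] at h2
    rw [← Nat.cast_card] at h2
    exact_mod_cast h2
  have h2 : ringKrullDim (MvPolynomial (Fin s) k) = s := by
    rw [MvPolynomial.ringKrullDim_of_isNoetherianRing, ringKrullDim_eq_zero_of_field]; simp
  have h3 : (s : WithBot ℕ∞) ≤ ringKrullDim (MvPolynomial (Fin s) k) := h2.ge
  obtain ⟨l, hl⟩ := Order.le_krullDim_iff.1 h3
  obtain ⟨Q, _, hQ, hQ'⟩ := Ideal.exists_ideal_over_prime_of_isIntegral l.head.asIdeal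
    (⊥ : Ideal B) (by
      rw [← RingHom.ker_eq_comap_bot,
        (RingHom.injective_iff_ker_eq_bot (algebraMap (MvPolynomial (Fin s) k) B)).1 hg]
      exact bot_le)
  have : Q.LiesOver l.head.asIdeal := ⟨hQ'.symm⟩
  obtain ⟨L, hL, -⟩ := Ideal.exists_ltSeries_of_hasGoingUp l Q
  have h5 := Order.LTSeries.length_le_krullDim L
  rw [hL, hl] at h5
  exact le_trans (by exact_mod_cast h1) h5

/-- The transcendence degree bounds the Krull dimension from above, by incomparability over a Noether
normalization. -/
theorem exists_algebraicIndependent_of_le_ringKrullDim {k B : Type} [Field k] [CommRing B]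
    [IsDomain B] [Algebra k B] [Algebra.FiniteType k B] {m : ℕ}
    (h : (m : WithBot ℕ∞) ≤ ringKrullDim B) :
    ∃ τ : Fin m → B, AlgebraicIndependent k τ := by
  obtain ⟨s, g, hg, hgi⟩ := exists_integral_inj_algHom_of_fg k B
  let := g.toRingHom.toAlgebra
  have : Algebra.IsIntegral (MvPolynomial (Fin s) k) B := ⟨hgi⟩
  have h2 : ringKrullDim (MvPolynomial (Fin s) k) = s := by
    rw [MvPolynomial.ringKrullDim_of_isNoetherianRing, ringKrullDim_eq_zero_of_field]; simp
  have h3 : ringKrullDim B ≤ ringKrullDim (MvPolynomial (Fin s) k) :=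
    Order.krullDim_le_of_strictMono (PrimeSpectrum.comap (algebraMap _ B)) (by
      intro I J hIJ
      exact Ideal.IsIntegral.comap_lt_comap (R := MvPolynomial (Fin s) k) hIJ)
  have h4 : m ≤ s := by
    have := h.trans (h3.trans h2.le)
    exact_mod_cast this
  refine ⟨fun i => g (X (Fin.castLE h4 i)), ?_⟩
  have h5 := (MvPolynomial.algebraicIndependent_X (Fin s) k).comp (Fin.castLE h4)
    (Fin.castLE_injective h4)
  exact h5.map' hg

end DefectSum

/-! ### Zero loci, irreducibility and dimension -/

namespace DefectSum

variable {N : ℕ}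

theorem mem_vanishingIdeal' {V : Set (Aff N)} {p : MvPolynomial (Fin (N + 1)) ℂ} :
    p ∈ vanishingIdeal ℂ V ↔ ∀ v ∈ V, eval v p = 0 := by
  rw [mem_vanishingIdeal_iff]; rfl

theorem mem_zeroLocus' {P : Ideal (MvPolynomial (Fin (N + 1)) ℂ)} {v : Aff N} :
    v ∈ zeroLocus ℂ P ↔ ∀ p ∈ P, eval v p = 0 := by
  rw [mem_zeroLocus_iff]; rfl

theorem zClosed_zeroLocus (P : Ideal (MvPolynomial (Fin (N + 1)) ℂ)) :
    zClosed (zeroLocus ℂ P : Set (Aff N)) :=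
  ⟨P, by ext v; exact mem_zeroLocus'⟩

theorem zeroLocus_vanishingIdeal {V : Set (Aff N)} (hV : zClosed V) :
    zeroLocus ℂ (vanishingIdeal ℂ V) = V := by
  obtain ⟨S, rfl⟩ := hV
  apply le_antisymm
  · intro v hv p hp
    rw [mem_zeroLocus'] at hv
    exact hv p (mem_vanishingIdeal'.2 fun w hw => hw p hp)
  · exact zeroLocus_vanishingIdeal_le _

theorem zIrred_zeroLocus (P : Ideal (MvPolynomial (Fin (N + 1)) ℂ)) [hP : P.IsPrime] :
    zIrred (zeroLocus ℂ P : Set (Aff N)) := by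
  have hI := IsPrime.vanishingIdeal_zeroLocus (K := ℂ) P
  constructor
  · by_contra h
    rw [Set.not_nonempty_iff_eq_empty] at h
    apply hP.ne_top
    rw [← hI, h, eq_top_iff]
    intro p _
    rw [mem_vanishingIdeal']
    simp
  · rintro C₁ C₂ ⟨S₁, rfl⟩ ⟨S₂, rfl⟩ hV
    by_contra! hcon
    obtain ⟨h1, h2⟩ := hcon
    have key : ∀ S : Set (MvPolynomial (Fin (N + 1)) ℂ),
        ¬ (zeroLocus ℂ P ⊆ {x : Aff N | ∀ p ∈ S, eval x p = 0}) → ∃ p ∈ S, p ∉ P := by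
      intro S h
      by_contra! hS
      exact h fun v hv p hp => mem_zeroLocus'.1 hv p (hS p hp)
    obtain ⟨p, hp, hpP⟩ := key _ h1
    obtain ⟨q, hq, hqP⟩ := key _ h2
    have : p * q ∈ P := by
      rw [← hI, mem_vanishingIdeal']
      intro v hv
      rcases hV hv with h | h
      · simp [h p hp]
      · simp [h q hq]
    rcases hP.mem_or_mem this with h | h
    · exact hpP h
    · exact hqP h

theorem isPrime_vanishingIdeal {V : Set (Aff N)} (hV : zIrred V) :
    (vanishingIdeal ℂ V : Ideal (MvPolynomial (Fin (N + 1)) ℂ)).IsPrime := by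
  constructor
  · intro h
    obtain ⟨v, hv⟩ := hV.1
    have : (1 : MvPolynomial (Fin (N + 1)) ℂ) ∈ vanishingIdeal ℂ V := by rw [h]; trivial
    simpa using mem_vanishingIdeal'.1 this v hv
  · intro p q hpq
    rw [mem_vanishingIdeal'] at hpq
    rcases hV.2 {x | ∀ r ∈ ({p} : Set (MvPolynomial (Fin (N + 1)) ℂ)), eval x r = 0}
      {x | ∀ r ∈ ({q} : Set (MvPolynomial (Fin (N + 1)) ℂ)), eval x r = 0} ⟨_, rfl⟩ ⟨_, rfl⟩
      (fun v hv => by simpa using hpq v hv) with h | h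
    · left; rw [mem_vanishingIdeal']; intro v hv; exact h hv p rfl
    · right; rw [mem_vanishingIdeal']; intro v hv; exact h hv q rfl

/-- Half of the dictionary between primes and irreducible closed sets; by the Nullstellensatz distinct
primes have distinct zero loci. -/
theorem ringKrullDim_le_adim (P : Ideal (MvPolynomial (Fin (N + 1)) ℂ)) {V : Set (Aff N)}
    (hV : zeroLocus ℂ P ⊆ V) :
    ringKrullDim (MvPolynomial (Fin (N + 1)) ℂ ⧸ P) ≤ adim V := by
  unfold ringKrullDim adim
  rw [← Order.krullDim_orderDual]
  refine Order.krullDim_le_of_strictMono (fun Q =>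
    ⟨zeroLocus ℂ ((OrderDual.ofDual Q).asIdeal.comap (Ideal.Quotient.mk P)), zClosed_zeroLocus _,
      zIrred_zeroLocus _, ?_⟩) ?_
  · refine le_trans ?_ hV
    intro v hv
    rw [mem_zeroLocus'] at hv ⊢
    intro p hp
    apply hv
    rw [Ideal.mem_comap, Ideal.Quotient.eq_zero_iff_mem.2 hp]
    exact zero_mem _
  · intro Q₁ Q₂ h
    have h' : (OrderDual.ofDual Q₂).asIdeal < (OrderDual.ofDual Q₁).asIdeal := h
    have h1 : zeroLocus ℂ ((OrderDual.ofDual Q₁).asIdeal.comap (Ideal.Quotient.mk P)) ≤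
        zeroLocus ℂ ((OrderDual.ofDual Q₂).asIdeal.comap (Ideal.Quotient.mk P)) := by
      intro v hv
      rw [mem_zeroLocus'] at hv ⊢
      intro p hp
      exact hv p (h'.le hp)
    refine lt_of_le_of_ne h1 fun heq => h'.ne ?_
    have heq' : zeroLocus ℂ ((OrderDual.ofDual Q₁).asIdeal.comap (Ideal.Quotient.mk P)) =
      zeroLocus ℂ ((OrderDual.ofDual Q₂).asIdeal.comap (Ideal.Quotient.mk P)) :=
        congrArg Subtype.val heq
    have h2 := congrArg (vanishingIdeal ℂ) heq'
    rw [IsPrime.vanishingIdeal_zeroLocus, IsPrime.vanishingIdeal_zeroLocus] at h2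
    exact (Ideal.comap_injective_of_surjective _ Ideal.Quotient.mk_surjective h2).symm

theorem adim_le_ringKrullDim (V : Set (Aff N)) :
    adim V ≤ ringKrullDim (MvPolynomial (Fin (N + 1)) ℂ ⧸ (vanishingIdeal ℂ V :
      Ideal (MvPolynomial (Fin (N + 1)) ℂ))) := by
  unfold ringKrullDim adim
  rw [← Order.krullDim_orderDual (α := PrimeSpectrum _)]
  set I : Ideal (MvPolynomial (Fin (N + 1)) ℂ) := vanishingIdeal ℂ V with hI
  have hle : ∀ W : {W : Set (Aff N) // zClosed W ∧ zIrred W ∧ W ⊆ V},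
      I ≤ vanishingIdeal ℂ W.1 := by
    intro W p hp
    rw [mem_vanishingIdeal'] at hp ⊢
    intro v hv
    exact hp v (W.2.2.2 hv)
  have hcm : ∀ W : {W : Set (Aff N) // zClosed W ∧ zIrred W ∧ W ⊆ V},
      ((vanishingIdeal ℂ W.1 : Ideal (MvPolynomial (Fin (N + 1)) ℂ)).map
        (Ideal.Quotient.mk I)).comap (Ideal.Quotient.mk I) = vanishingIdeal ℂ W.1 := by
    intro W
    rw [Ideal.comap_map_of_surjective _ Ideal.Quotient.mk_surjective, ← RingHom.ker_eq_comap_bot,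
      Ideal.mk_ker, sup_eq_left]
    exact hle W
  refine Order.krullDim_le_of_strictMono (fun W => OrderDual.toDual
    ⟨(vanishingIdeal ℂ W.1 : Ideal (MvPolynomial (Fin (N + 1)) ℂ)).map (Ideal.Quotient.mk I), ?_⟩) ?_
  · have := isPrime_vanishingIdeal W.2.2.1
    apply Ideal.map_isPrime_of_surjective Ideal.Quotient.mk_surjective
    rw [Ideal.mk_ker]; exact hle W
  · intro W₁ W₂ h
    have h' : W₁.1 < W₂.1 := h
    rw [OrderDual.toDual_lt_toDual]
    have h1 : (vanishingIdeal ℂ W₂.1 : Ideal (MvPolynomial (Fin (N + 1)) ℂ)) ≤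
        vanishingIdeal ℂ W₁.1 := by
      intro p hp
      rw [mem_vanishingIdeal'] at hp ⊢
      intro v hv
      exact hp v (h'.le hv)
    refine lt_of_le_of_ne (Ideal.map_mono h1) fun heq => h'.ne ?_
    have heq' := congrArg PrimeSpectrum.asIdeal heq
    have h2 := congrArg (Ideal.comap (Ideal.Quotient.mk I)) heq'
    simp only [hcm] at h2
    rw [← zeroLocus_vanishingIdeal W₁.2.1, ← zeroLocus_vanishingIdeal W₂.2.1, h2]

/-- Dimension is bounded below by exhibiting a point with coordinates in a domain `L`, given by `f`,
and independent polynomial functions `τ` of it. -/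
theorem card_le_adim {L ι : Type} [CommRing L] [IsDomain L] [Algebra ℂ L] [Finite ι]
    (f : MvPolynomial (Fin (N + 1)) ℂ →ₐ[ℂ] L) (τ : ι → MvPolynomial (Fin (N + 1)) ℂ)
    (hτ : AlgebraicIndependent ℂ (fun i => f (τ i))) {V : Set (Aff N)}
    (hV : zeroLocus ℂ (RingHom.ker f) ⊆ V) : (Nat.card ι : WithBot ℕ∞) ≤ adim V := by
  refine le_trans ?_ (ringKrullDim_le_adim _ hV)
  have : (RingHom.ker f).IsPrime := RingHom.ker_isPrime f
  apply card_le_ringKrullDim (k := ℂ) (τ := fun i => Ideal.Quotient.mk (RingHom.ker f) (τ i))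
  refine AlgebraicIndependent.of_comp (Ideal.Quotient.liftₐ (RingHom.ker f) f fun a ha => ha) ?_
  exact hτ

theorem exists_algebraicIndependent_of_le_adim {V : Set (Aff N)} (hV : zIrred V) {m : ℕ}
    (h : (m : WithBot ℕ∞) ≤ adim V) :
    ∃ τ : Fin m → MvPolynomial (Fin (N + 1)) ℂ ⧸ (vanishingIdeal ℂ V :
      Ideal (MvPolynomial (Fin (N + 1)) ℂ)), AlgebraicIndependent ℂ τ := by
  have := isPrime_vanishingIdeal hV
  exact exists_algebraicIndependent_of_le_ringKrullDim (h.trans (adim_le_ringKrullDim V))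

end DefectSum

/-! ### Closures, cones, secant and dual varieties -/

namespace DefectSum

variable {N : ℕ}

theorem zClosure_eq (V : Set (Aff N)) : zClosure V = zeroLocus ℂ (vanishingIdeal ℂ V) := by
  apply le_antisymm
  · apply Set.sInter_subset_of_mem
    exact ⟨zClosed_zeroLocus _, zeroLocus_vanishingIdeal_le _⟩
  · intro v hv C hC
    obtain ⟨⟨S, rfl⟩, hVS⟩ := hC
    intro p hp
    exact mem_zeroLocus'.1 hv p (mem_vanishingIdeal'.2 fun w hw => hVS hw p hp)

theorem zClosed_zClosure (V : Set (Aff N)) : zClosed (zClosure V) := by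
  rw [zClosure_eq]; exact zClosed_zeroLocus _

theorem subset_zClosure (V : Set (Aff N)) : V ⊆ zClosure V := by
  rw [zClosure_eq]; exact zeroLocus_vanishingIdeal_le _

theorem zClosure_min {V C : Set (Aff N)} (hC : zClosed C) (h : V ⊆ C) : zClosure V ⊆ C :=
  Set.sInter_subset_of_mem ⟨hC, h⟩

theorem zero_mem_cone (X : Set (Proj N)) : (0 : Aff N) ∈ cone X := Or.inr rfl

theorem mem_cone_of_ne {X : Set (Proj N)} {v : Aff N} (hv : v ≠ 0) :
    v ∈ cone X ↔ Projectivization.mk ℂ v hv ∈ X := by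
  constructor
  · rintro (⟨_, h⟩ | h)
    · exact h
    · exact absurd h hv
  · intro h; exact Or.inl ⟨hv, h⟩

theorem smul_mem_cone {X : Set (Proj N)} {v : Aff N} (h : v ∈ cone X) (c : ℂ) :
    c • v ∈ cone X := by
  by_cases hc : c • v = 0
  · rw [hc]; exact zero_mem_cone X
  · have hv : v ≠ 0 := fun h => hc (by simp [h])
    rw [mem_cone_of_ne hc]
    rw [mem_cone_of_ne hv] at h
    have : Projectivization.mk ℂ (c • v) hc = Projectivization.mk ℂ v hv :=
      (Projectivization.mk_eq_mk_iff' ℂ _ _ _ _).2 ⟨c, rfl⟩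
    rwa [this]

/-- Pulling a closed set back along a polynomial map gives a closed set. -/
theorem zClosed_preimage {C : Set (Aff N)} (hC : zClosed C)
    (g : Fin (N + 1) → MvPolynomial (Fin (N + 1)) ℂ) :
    zClosed {v : Aff N | (fun i => eval v (g i)) ∈ C} := by
  obtain ⟨S, rfl⟩ := hC
  refine ⟨(fun p => bind₁ g p) '' S, ?_⟩
  ext v
  simp only [Set.mem_setOf_eq, Set.forall_mem_image]
  refine forall₂_congr fun p _ => ?_
  rw [← coe_aeval_eq_eval, ← coe_aeval_eq_eval]
  have : aeval v (bind₁ g p) = aeval (fun i => aeval v (g i)) p := aeval_bind₁ _ _ _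
  simp only [RingHom.coe_coe]
  rw [this]

theorem zClosed_add (C : Set (Aff N)) (hC : zClosed C) (w : Aff N) :
    zClosed {v : Aff N | w + v ∈ C} := by
  convert zClosed_preimage hC (fun i => MvPolynomial.C (w i) + X i) using 3 with v
  have : (fun i => eval v (MvPolynomial.C (w i) + X i)) = w + v := by ext i; simp
  rw [this]

theorem zClosed_smul (C : Set (Aff N)) (hC : zClosed C) (c : ℂ) :
    zClosed {v : Aff N | c • v ∈ C} := by
  convert zClosed_preimage hC (fun i => MvPolynomial.C c * X i) using 3 with v
  have : (fun i => eval v (MvPolynomial.C c * X i)) = c • v := by ext i; simp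
  rw [this]

theorem smul_mem_zClosure {X : Set (Proj N)} {v : Aff N} (h : v ∈ zClosure (cone X)) (c : ℂ) :
    c • v ∈ zClosure (cone X) :=
  zClosure_min (zClosed_smul _ (zClosed_zClosure (cone X)) c)
    (fun _ hw => subset_zClosure _ (smul_mem_cone hw c)) h

theorem cone_pClosure (S : Set (Proj N)) : cone (pClosure S) = zClosure (cone S) := by
  ext v
  by_cases hv : v = 0
  · subst hv
    exact ⟨fun _ => subset_zClosure _ (zero_mem_cone S), fun _ => zero_mem_cone _⟩
  · rw [mem_cone_of_ne hv]
    obtain ⟨c, hc⟩ := Projectivization.exists_smul_eq_mk_rep ℂ v hv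
    change (Projectivization.mk ℂ v hv).rep ∈ zClosure (cone S) ↔ _
    rw [← hc]
    constructor
    · intro h
      have := smul_mem_zClosure h (c⁻¹ : ℂˣ)
      rwa [Units.smul_def, smul_smul, Units.inv_mul, one_smul] at this
    · intro h
      exact smul_mem_zClosure h c

theorem adim_zero : adim ({0} : Set (Aff N)) ≤ 0 := by
  have : Subsingleton {W : Set (Aff N) // zClosed W ∧ zIrred W ∧ W ⊆ {0}} := by
    constructor
    intro a b
    ext1
    rw [(Set.Nonempty.subset_singleton_iff a.2.2.1.1).1 a.2.2.2,
      (Set.Nonempty.subset_singleton_iff b.2.2.1.1).1 b.2.2.2]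
  exact Order.krullDim_nonpos_of_subsingleton

theorem exists_ne_zero_of_adim {V : Set (Aff N)} (h0 : 0 ∈ V) {m : ℕ}
    (h : adim V = ((m + 1 : ℕ) : WithBot ℕ∞)) :
    ∃ v ∈ V, v ≠ 0 := by
  by_contra! hcon
  have : V = {0} := Set.eq_singleton_iff_unique_mem.2 ⟨h0, hcon⟩
  have h1 := adim_zero (N := N)
  rw [← this, h] at h1
  have h2 : (m + 1 : ℕ) ≤ 0 := by exact_mod_cast h1
  omega

theorem cone_rep_mem {X : Set (Proj N)} {x : Proj N} (hx : x ∈ X) : x.rep ∈ cone X := by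
  rw [mem_cone_of_ne (Projectivization.rep_nonzero x), Projectivization.mk_rep]; exact hx

/-- The embedded tangent space is constant along the punctured lines of the cone. -/
theorem tangentAt_smul {X : Set (Proj N)} {v : Aff N} {c : ℂ} (hc : c ≠ 0) :
    tangentAt (cone X) (c • v) = tangentAt (cone X) v := by
  have key : ∀ (v : Aff N) (c : ℂ), c ≠ 0 →
      tangentAt (cone X) v ≤ tangentAt (cone X) (c • v) := by
    intro v c hc t ht
    simp only [tangentAt, Submodule.mem_iInf, LinearMap.mem_ker] at ht ⊢
    intro p hp
    let q : MvPolynomial (Fin (N + 1)) ℂ := bind₁ (fun i => C c * MvPolynomial.X i) p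
    have hq : q ∈ vanishSet (cone X) := by
      intro w hw
      have : eval w q = eval (c • w) p := by
        simp only [q]
        rw [← coe_aeval_eq_eval, ← coe_aeval_eq_eval]
        simp only [RingHom.coe_coe]
        rw [aeval_bind₁]
        congr 2
        ext i; simp
      rw [this]
      exact hp _ (smul_mem_cone hw c)
    have h1 := ht q hq
    have h2 : ∀ i, eval v (pderiv i q) = c * eval (c • v) (pderiv i p) := by
      intro i
      have : ∀ p : MvPolynomial (Fin (N + 1)) ℂ,
          pderiv i (bind₁ (fun i => C c * MvPolynomial.X i) p) =
          C c * bind₁ (fun i => C c * MvPolynomial.X i) (pderiv i p) := by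
        intro p
        induction p using MvPolynomial.induction_on with
        | C a => simp
        | add p q hp hq => simp [hp, hq, mul_add]
        | mul_X p j hp =>
          simp only [map_mul, bind₁_X_right, Derivation.leibniz, smul_eq_mul, hp, map_add,
            pderiv_C, pderiv_X]
          by_cases hij : j = i
          · subst hij; simp; ring
          · simp [Pi.single_apply, hij, Ne.symm hij]; ring
      simp only [q, this, map_mul, eval_C]
      congr 1
      rw [← coe_aeval_eq_eval, ← coe_aeval_eq_eval]
      simp only [RingHom.coe_coe]
      rw [aeval_bind₁]
      congr 2
      ext i; simp
    have h3 : polyDiff v q = c • polyDiff (c • v) p := by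
      simp only [polyDiff, h2, Finset.smul_sum, smul_smul]
    rw [h3, LinearMap.smul_apply, smul_eq_mul, mul_eq_zero] at h1
    exact h1.resolve_left hc
  apply le_antisymm
  · have := key (c • v) c⁻¹ (inv_ne_zero hc)
    rwa [smul_smul, inv_mul_cancel₀ hc, one_smul] at this
  · exact key v c hc

theorem hypSub_smul {a : Aff N} {c : ℂ} (hc : c ≠ 0) : hypSub (c • a) = hypSub a := by
  ext v
  simp only [hypSub, LinearMap.mem_ker, LinearMap.sum_apply, LinearMap.smul_apply,
    LinearMap.proj_apply, Pi.smul_apply, smul_eq_mul, mul_assoc, ← Finset.mul_sum, mul_eq_zero, hc,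
    false_or]

theorem mem_cone_dualVar {X : Set (Proj N)} {v h : Aff N} (hv : v ∈ cone X) (hv0 : v ≠ 0)
    (hh : tangentAt (cone X) v ≤ hypSub h) : h ∈ cone (dualVar X) := by
  by_cases h0 : h = 0
  · rw [h0]; exact zero_mem_cone _
  unfold dualVar
  rw [cone_pClosure]
  apply subset_zClosure
  rw [mem_cone_of_ne h0]
  refine ⟨Projectivization.mk ℂ v hv0, (mem_cone_of_ne hv0).1 hv, ?_⟩
  obtain ⟨c, hc⟩ := Projectivization.exists_smul_eq_mk_rep ℂ v hv0
  obtain ⟨d, hd⟩ := Projectivization.exists_smul_eq_mk_rep ℂ h h0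
  rw [projTangent, ← hc, ← hd, Units.smul_def, Units.smul_def, tangentAt_smul c.ne_zero,
    hypSub_smul d.ne_zero]
  exact hh

theorem finrank_tangentAt {X : Set (Proj N)} {n : ℕ} (hX : SmoothVariety X n) {v : Aff N}
    (hv : v ∈ cone X) (hv0 : v ≠ 0) : Module.finrank ℂ (tangentAt (cone X) v) = n + 1 := by
  have h := hX.2.2.2 _ ((mem_cone_of_ne hv0).1 hv)
  obtain ⟨c, hc⟩ := Projectivization.exists_smul_eq_mk_rep ℂ v hv0
  rwa [projTangent, ← hc, Units.smul_def, tangentAt_smul c.ne_zero] at h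

open Pointwise in
/-- The cone over the secant variety is the closure of the sum of the cone with itself. The dimension
hypothesis only serves to exclude that `X` is a single point. -/
theorem cone_secantVar {X : Set (Proj N)} {s : ℕ}
    (hs : adim (cone (secantVar X)) = ((s + 1 : ℕ) : WithBot ℕ∞)) :
    cone (secantVar X) = zClosure (cone X + cone X) := by
  have hz := exists_ne_zero_of_adim (zero_mem_cone _) hs
  unfold secantVar joinVar at hz ⊢
  rw [cone_pClosure] at hz ⊢
  -- a single point has an empty secant variety, so the dimension hypothesis yields two points
  have htwo : ∃ y ∈ X, ∃ x ∈ X, y ≠ x := by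
    by_contra! hcon
    obtain ⟨v, hv, hv0⟩ := hz
    have h1 : cone {z | ∃ y ∈ X, ∃ x ∈ X, y ≠ x ∧ z ∈ pline y x} ⊆ {0} := by
      rintro w (⟨_, y, hy, x, hx, hxy, _⟩ | hw)
      · exact absurd (hcon y hy x hx) hxy
      · exact hw
    have h2 : zClosed ({0} : Set (Aff N)) := ⟨Set.range MvPolynomial.X, by
      ext v; simp [funext_iff]⟩
    exact hv0 (zClosure_min h2 h1 hv)
  apply le_antisymm
  · apply zClosure_min (zClosed_zClosure _)
    rintro w (⟨hw0, y, hy, x, hx, hxy, hw⟩ | hw)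
    · apply subset_zClosure
      have h1 : w ∈ y.submodule ⊔ x.submodule := by
        apply hw
        rw [Projectivization.submodule_mk]; exact Submodule.mem_span_singleton_self w
      rw [Projectivization.submodule_eq, Projectivization.submodule_eq,
        Submodule.mem_sup] at h1
      obtain ⟨a, ha, b, hb, rfl⟩ := h1
      obtain ⟨a', rfl⟩ := Submodule.mem_span_singleton.1 ha
      obtain ⟨b', rfl⟩ := Submodule.mem_span_singleton.1 hb
      exact Set.add_mem_add (smul_mem_cone (cone_rep_mem hy) _) (smul_mem_cone (cone_rep_mem hx) _)
    · rw [Set.mem_singleton_iff.1 hw]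
      apply subset_zClosure
      exact ⟨0, zero_mem_cone _, 0, zero_mem_cone _, by simp⟩
  · apply zClosure_min (zClosed_zClosure _)
    refine subset_trans ?_ (subset_zClosure _)
    have hcone : ∀ v ∈ cone X, v ∈ cone {z | ∃ y ∈ X, ∃ x ∈ X, y ≠ x ∧ z ∈ pline y x} := by
      intro v hv
      by_cases hv0 : v = 0
      · rw [hv0]; exact zero_mem_cone _
      · rw [mem_cone_of_ne hv0] at hv ⊢
        obtain ⟨y, hy, hyv⟩ : ∃ y ∈ X, y ≠ Projectivization.mk ℂ v hv0 := by
          obtain ⟨y, hy, x, hx, hxy⟩ := htwo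
          by_cases h : y = Projectivization.mk ℂ v hv0
          · exact ⟨x, hx, fun h' => hxy (h.trans h'.symm)⟩
          · exact ⟨y, hy, h⟩
        exact ⟨y, hy, _, hv, hyv, by simp [pline]⟩
    rintro _ ⟨v, hv, w, hw, rfl⟩
    change v + w ∈ _
    by_cases hv0 : v = 0
    · rw [hv0, zero_add]; exact hcone w hw
    by_cases hw0 : w = 0
    · rw [hw0, add_zero]; exact hcone v hv
    by_cases hvw : Projectivization.mk ℂ v hv0 = Projectivization.mk ℂ w hw0
    · obtain ⟨c, hc⟩ := (Projectivization.mk_eq_mk_iff' ℂ _ _ _ _).1 hvw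
      rw [← hc, show c • w + w = (c + 1) • w by rw [add_smul, one_smul]]
      exact hcone _ (smul_mem_cone hw _)
    by_cases h0 : v + w = 0
    · rw [h0]; exact zero_mem_cone _
    rw [mem_cone_of_ne h0]
    refine ⟨_, (mem_cone_of_ne hv0).1 hv, _, (mem_cone_of_ne hw0).1 hw, hvw, ?_⟩
    simp only [pline, Set.mem_setOf_eq, Projectivization.submodule_mk]
    rw [Submodule.span_singleton_le_iff_mem]
    exact Submodule.add_mem_sup (Submodule.mem_span_singleton_self v)
      (Submodule.mem_span_singleton_self w)

end DefectSum

/-! ### Generic points -/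

namespace DefectSum

variable {N : ℕ}

/-- A point with coordinates in a `ℂ`-algebra is generic on `V` when the polynomials killing it
are exactly those vanishing on `V`. -/
def IsGeneric {K : Type} [CommRing K] [Algebra ℂ K] (V : Set (Aff N)) (x : Fin (N + 1) → K) :
    Prop :=
  ∀ p : MvPolynomial (Fin (N + 1)) ℂ, aeval x p = 0 ↔ ∀ v ∈ V, eval v p = 0

/-- The chain rule for a derivation applied to a polynomial expression. -/
theorem derivation_aeval {k A M σ : Type*} [CommRing k] [CommRing A] [Algebra k A] [AddCommGroup M]
    [Module A M] [Module k M] [Fintype σ] (D : Derivation k A M) (x : σ → A)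
    (p : MvPolynomial σ k) :
    D (aeval x p) = ∑ i, aeval x (pderiv i p) • D (x i) := by
  classical
  induction p using MvPolynomial.induction_on with
  | C a => simp
  | add p q hp hq => simp [hp, hq, add_smul, Finset.sum_add_distrib]
  | mul_X p j hp =>
    simp only [map_mul, aeval_X, Derivation.leibniz, hp, smul_eq_mul, map_add, pderiv_X, add_smul,
      Finset.sum_add_distrib, Finset.smul_sum, smul_smul]
    congr 1
    rw [Finset.sum_eq_single j]
    · simp
    · intro b _ hb; simp [Pi.single_apply, hb.symm]
    · simp

theorem exists_coord_ne {K : Type} [CommRing K] [Algebra ℂ K] {V : Set (Aff N)}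
    {x : Fin (N + 1) → K} (hx : IsGeneric V x) {v : Aff N} (hv : v ∈ V) (hv0 : v ≠ 0) :
    ∃ i, x i ≠ 0 := by
  by_contra! hcon
  apply hv0
  ext i
  have := (hx (X i)).1 (by simp [hcon i]) v hv
  simpa using this

/-- A polynomial relation between the coordinates and auxiliary parameters that holds at all
nonzero points of `V` and all values of the parameters holds at a generic point. -/
theorem aeval_eq_zero_of_generic {K σ : Type} [CommRing K] [IsDomain K] [Algebra ℂ K]
    {V : Set (Aff N)} {x : Fin (N + 1) → K} (hx : IsGeneric V x) (hV : ∃ v ∈ V, v ≠ 0)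
    (t : σ → K) (Q : MvPolynomial (σ ⊕ Fin (N + 1)) ℂ)
    (hQ : ∀ v ∈ V, v ≠ 0 → ∀ w : σ → ℂ, eval (Sum.elim w v) Q = 0) :
    aeval (Sum.elim t x) Q = 0 := by
  set Q' := sumToIter ℂ σ (Fin (N + 1)) Q with hQ'
  have key : ∀ {B : Type} [CommRing B] [Algebra ℂ B] (t : σ → B) (x : Fin (N + 1) → B),
      aeval (Sum.elim t x) Q = eval₂ (aeval x : _ →ₐ[ℂ] B).toRingHom t Q' := by
    intro B _ _ t x
    have : ∀ P : MvPolynomial (σ ⊕ Fin (N + 1)) ℂ, aeval (Sum.elim t x) P =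
        eval₂ (aeval x : _ →ₐ[ℂ] B).toRingHom t (sumToIter ℂ σ (Fin (N + 1)) P) := by
      intro P
      induction P using MvPolynomial.induction_on with
      | C a => rw [sumToIter_C]; simp [algebraMap_eq]
      | add p q hp hq => simp [hp, hq]
      | mul_X p j hp =>
        rw [map_mul, map_mul, eval₂_mul, hp]
        congr 1
        cases j <;> simp [sumToIter_Xl, sumToIter_Xr]
    exact this Q
  have hcoef : ∀ m, ∀ v ∈ V, v ≠ 0 → eval v (Q'.coeff m) = 0 := by
    intro m v hv hv0
    have h1 : MvPolynomial.map (eval v) Q' = 0 := by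
      apply MvPolynomial.funext
      intro w
      rw [map_zero, eval_map]
      exact (key w v).symm.trans (hQ v hv hv0 w)
    have h2 := congrArg (coeff m) h1
    rwa [coeff_map, coeff_zero] at h2
  obtain ⟨v, hv, hv0⟩ := hV
  obtain ⟨i, hi⟩ := exists_coord_ne hx hv hv0
  have hcoef' : ∀ m, aeval x (Q'.coeff m) = 0 := by
    intro m
    have : aeval x (X i * Q'.coeff m) = 0 := by
      rw [hx]
      intro w hw
      by_cases hw0 : w = 0
      · simp [hw0]
      · simp [hcoef m w hw hw0]
    rw [map_mul, aeval_X, mul_eq_zero] at this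
    exact this.resolve_left hi
  rw [key, eval₂_eq]
  exact Finset.sum_eq_zero fun m _ => by
    have := hcoef' m
    simp only [AlgHom.toRingHom_eq_coe, RingHom.coe_coe, this, zero_mul]

/-- Euler's relation. The ideal of a cone is homogeneous, which is used here in the form that `p`
vanishes on the line through each point of the cone. -/
theorem euler {K : Type} [CommRing K] [Algebra ℂ K] {X : Set (Proj N)} {x : Fin (N + 1) → K}
    (hx : IsGeneric (cone X) x) {p : MvPolynomial (Fin (N + 1)) ℂ}
    (hp : p ∈ vanishingIdeal ℂ (cone X)) :
    ∑ i, aeval x (pderiv i p) * x i = 0 := by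
  rw [mem_vanishingIdeal'] at hp
  have h := (hx (∑ i, pderiv i p * MvPolynomial.X i)).2 ?_
  · simpa using h
  intro v hv
  let g : Polynomial ℂ := aeval (fun i => Polynomial.C (v i) * Polynomial.X) p
  have hev : ∀ (c : ℂ) (q : MvPolynomial (Fin (N + 1)) ℂ), Polynomial.eval c
      (aeval (fun i => Polynomial.C (v i) * Polynomial.X) q) = eval (c • v) q := by
    intro c q
    have : (Polynomial.aeval c : Polynomial ℂ →ₐ[ℂ] ℂ)
      (aeval (fun i => Polynomial.C (v i) * Polynomial.X) q) = aeval (c • v) q := by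
      rw [← AlgHom.comp_apply, comp_aeval]
      congr 2
      ext i
      simp only [Function.comp_apply, map_mul, Polynomial.aeval_C, Polynomial.aeval_X,
        Pi.smul_apply, smul_eq_mul]
      exact mul_comm _ _
    rw [Polynomial.coe_aeval_eq_eval] at this
    exact this
  have hg : g = 0 := by
    apply Polynomial.funext
    intro c
    rw [Polynomial.eval_zero, hev]
    exact hp _ (smul_mem_cone hv c)
  have h1 := derivation_aeval (Polynomial.derivative' (R := ℂ))
    (fun i => Polynomial.C (v i) * Polynomial.X) p
  change Polynomial.derivative g = _ at h1
  rw [hg, Polynomial.derivative_zero] at h1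
  have h2 := congrArg (Polynomial.eval 1) h1
  simp [Polynomial.eval_finsetSum, hev] at h2
  simpa using h2.symm

end DefectSum

/-! ### Jacobian frames of a smooth cone -/

namespace DefectSum

variable {N : ℕ}

theorem eval_eq_aeval {σ : Type*} (v : σ → ℂ) (p : MvPolynomial σ ℂ) : eval v p = aeval v p := by
  rw [← coe_aeval_eq_eval, RingHom.coe_coe]

/-- The Jacobian matrix of a tuple of polynomials at a point, one column per polynomial. -/
noncomputable def grad {K : Type} [CommRing K] [Algebra ℂ K] {c : ℕ}
    (p : Fin c → MvPolynomial (Fin (N + 1)) ℂ) (x : Fin (N + 1) → K) :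
    Matrix (Fin (N + 1)) (Fin c) K :=
  Matrix.of fun i a => aeval x (pderiv i (p a))

/-- A constant-coefficient combination of the maximal minors of the Jacobian matrix of `p`. -/
noncomputable def frameDet {c : ℕ} (p : Fin c → MvPolynomial (Fin (N + 1)) ℂ)
    (Λ : Matrix (Fin c) (Fin (N + 1)) ℂ) : MvPolynomial (Fin (N + 1)) ℂ :=
  Matrix.det (Matrix.of fun a b => ∑ i, C (Λ a i) * pderiv i (p b))

theorem aeval_frameDet {K : Type} [CommRing K] [Algebra ℂ K] {c : ℕ}
    (p : Fin c → MvPolynomial (Fin (N + 1)) ℂ) (Λ : Matrix (Fin c) (Fin (N + 1)) ℂ)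
    (x : Fin (N + 1) → K) :
    aeval x (frameDet p Λ) = Matrix.det (Λ.map (algebraMap ℂ K) * grad p x) := by
  unfold frameDet
  rw [AlgHom.map_det]
  congr 1
  ext i j
  rw [AlgHom.mapMatrix_apply, Matrix.map_apply, Matrix.mul_apply, Matrix.of_apply, map_sum]
  simp [grad]

/-- At each nonzero point of the cone of a smooth variety the embedded tangent space is cut out by the
differentials of `N - n` equations, so some frame determinant is nonzero there. -/
theorem frame_at {X : Set (Proj N)} {n c : ℕ} (hX : SmoothVariety X n) (hc : c + n = N) {y : Aff N}
    (hy : y ∈ cone X) (hy0 : y ≠ 0) :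
    ∃ p : Fin c → MvPolynomial (Fin (N + 1)) ℂ, (∀ a, p a ∈ vanishingIdeal ℂ (cone X)) ∧
      ∃ Λ : Matrix (Fin c) (Fin (N + 1)) ℂ, eval y (frameDet p Λ) = 1 := by
  classical
  have hfr := finrank_tangentAt hX hy hy0
  set S : Submodule ℂ (Module.Dual ℂ (Aff N)) :=
    Submodule.span ℂ (polyDiff y '' vanishSet (cone X)) with hS
  have hT : tangentAt (cone X) y = S.dualCoannihilator := by
    ext v
    simp only [tangentAt, Submodule.mem_iInf, LinearMap.mem_ker, Submodule.mem_dualCoannihilator]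
    constructor
    · intro h φ hφ
      induction hφ using Submodule.span_induction with
      | mem φ hφ => obtain ⟨p, hp, rfl⟩ := hφ; exact h p hp
      | zero => rfl
      | add a b _ _ ha hb => simp [ha, hb]
      | smul a b _ hb => simp [hb]
    · intro h p hp
      exact h _ (Submodule.subset_span ⟨p, hp, rfl⟩)
  have hSc : Module.finrank ℂ S = c := by
    have h1 := Subspace.finrank_add_finrank_dualCoannihilator_eq S
    rw [← hT, hfr, Module.finrank_fin_fun] at h1
    omega
  have key : ∀ m, Module.finrank ℂ S = m → ∃ f : Fin m → Module.Dual ℂ (Aff N),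
      (∀ i, f i ∈ polyDiff y '' vanishSet (cone X)) ∧ LinearIndependent ℂ f := by
    rintro _ rfl
    obtain ⟨f, hf, -, hli⟩ := Submodule.exists_fun_fin_finrank_span_eq ℂ
      (polyDiff y '' vanishSet (cone X))
    exact ⟨f, hf, hli⟩
  obtain ⟨f, hf, hli⟩ := key c hSc
  choose p hp hpf using hf
  refine ⟨p, fun a => mem_vanishingIdeal'.2 (hp a), ?_⟩
  have hinj : LinearMap.ker (grad p y).mulVecLin = ⊥ := by
    rw [LinearMap.ker_eq_bot']
    intro g hg
    rw [Fintype.linearIndependent_iff] at hli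
    ext a
    refine hli g ?_ a
    ext i
    have := congrFun hg i
    simp only [Matrix.mulVecLin_apply, Matrix.mulVec, dotProduct, grad, Matrix.of_apply,
      coe_aeval_eq_eval, RingHom.coe_coe, Pi.zero_apply] at this
    simpa [← hpf, polyDiff, LinearMap.sum_apply, Pi.single_apply, mul_comm] using this
  obtain ⟨Λ, hΛ⟩ := LinearMap.exists_leftInverse_of_injective _ hinj
  refine ⟨LinearMap.toMatrix' Λ, ?_⟩
  have h1 := aeval_frameDet p (LinearMap.toMatrix' Λ) y
  rw [eval_eq_aeval, h1]
  have h2 : LinearMap.toMatrix' Λ * grad p y = 1 := by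
    have := congrArg LinearMap.toMatrix' hΛ
    rwa [LinearMap.toMatrix'_comp, ← Matrix.toLin'_apply', LinearMap.toMatrix'_toLin', LinearMap.toMatrix'_id] at this
  have h3 : (LinearMap.toMatrix' Λ).map (algebraMap ℂ ℂ) = LinearMap.toMatrix' Λ := by
    ext; simp
  rw [h3, h2, Matrix.det_one]

/-- Where a frame determinant does not vanish, the differential of every equation of the cone at the
generic point is a combination of the differentials in the frame. -/
theorem exists_coeff_grad {K : Type} [Field K] [Algebra ℂ K] {X : Set (Proj N)} {n c : ℕ}
    (hc : c + n = N) {x : Fin (N + 1) → K} (hx : IsGeneric (cone X) x)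
    {q : Fin (n + 1) → MvPolynomial (Fin (N + 1)) ℂ}
    (hq : AlgebraicIndependent ℂ fun k => aeval x (q k))
    {p : Fin c → MvPolynomial (Fin (N + 1)) ℂ} (hp : ∀ a, p a ∈ vanishingIdeal ℂ (cone X))
    {Λ : Matrix (Fin c) (Fin (N + 1)) ℂ} (hΛ : aeval x (frameDet p Λ) ≠ 0)
    {f : MvPolynomial (Fin (N + 1)) ℂ} (hf : f ∈ vanishingIdeal ℂ (cone X)) :
    ∃ μ : Fin c → K, ∀ i, aeval x (pderiv i f) = ∑ a, μ a * grad p x i a := by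
  classical
  choose D hD using fun k => exists_derivation hq (Pi.single k (1 : K))
  let E : (Fin (N + 1) → K) →ₗ[K] (Fin (n + 1) → K) :=
    LinearMap.pi fun k => ∑ i, (D k (x i)) • LinearMap.proj i
  have hE : ∀ (r : MvPolynomial (Fin (N + 1)) ℂ) k,
      E (fun i => aeval x (pderiv i r)) k = D k (aeval x r) := by
    intro r k
    rw [derivation_aeval (D k) x r]
    simp [E, LinearMap.sum_apply, mul_comm]
  have hEker : ∀ r ∈ vanishingIdeal ℂ (cone X),
      (fun i => aeval x (pderiv i r)) ∈ LinearMap.ker E := by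
    intro r hr
    rw [LinearMap.mem_ker]
    ext k
    rw [hE, (hx r).2 (mem_vanishingIdeal'.1 hr)]
    simp
  have hsurj : Function.Surjective E := by
    rw [← LinearMap.range_eq_top, eq_top_iff, ← (Pi.basisFun K (Fin (n + 1))).span_eq,
      Submodule.span_le]
    rintro _ ⟨j, rfl⟩
    refine ⟨fun i => aeval x (pderiv i (q j)), ?_⟩
    ext k
    rw [hE, hD]
    simp [Pi.single_apply, eq_comm]
  have hker : Module.finrank K (LinearMap.ker E) = c := by
    have h1 := LinearMap.finrank_range_add_finrank_ker E
    rw [LinearMap.range_eq_top.2 hsurj, finrank_top, Module.finrank_fin_fun,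
      Module.finrank_fin_fun] at h1
    omega
  have hli : LinearIndependent K (fun a : Fin c => fun i => aeval x (pderiv i (p a))) := by
    rw [Fintype.linearIndependent_iff]
    intro g hg
    rw [aeval_frameDet] at hΛ
    have h1 : (grad p x).mulVec g = 0 := by
      ext i
      have := congrFun hg i
      simp only [Finset.sum_apply, Pi.smul_apply, smul_eq_mul] at this
      simp only [Matrix.mulVec, dotProduct, grad, Matrix.of_apply]
      rw [← this]
      exact Finset.sum_congr rfl fun _ _ => mul_comm _ _
    have h2 := Matrix.eq_zero_of_mulVec_eq_zero hΛ (v := g) (by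
      rw [← Matrix.mulVec_mulVec, h1, Matrix.mulVec_zero])
    exact congrFun h2
  have hspan : Submodule.span K (Set.range fun a : Fin c => fun i => aeval x (pderiv i (p a))) =
      LinearMap.ker E := by
    apply Submodule.eq_of_le_of_finrank_eq
    · rw [Submodule.span_le]
      rintro _ ⟨a, rfl⟩
      exact hEker _ (hp a)
    · rw [finrank_span_eq_card hli, hker, Fintype.card_fin]
  have hfm := hEker f hf
  rw [← hspan, Submodule.mem_span_range_iff_exists_fun] at hfm
  obtain ⟨μ, hμ⟩ := hfm
  refine ⟨μ, fun i => ?_⟩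
  rw [← congrFun hμ i]
  simp [grad]

end DefectSum

/-! ### Existence of a generic point with parameters -/

namespace DefectSum

variable {N : ℕ}

/-- A field containing a generic point `x` of the cone over `X`, with `n + 1` algebraically
independent polynomial functions of `x`, together with `c` further independent indeterminates `t`;
the field is generated by `x` and `t`. -/
theorem exists_generic {X : Set (Proj N)} {n : ℕ} (hX : SmoothVariety X n) (c : ℕ) :
    ∃ (K : Type) (_ : Field K) (_ : Algebra ℂ K) (x : Fin (N + 1) → K) (t : Fin c → K)
      (q : Fin (n + 1) → MvPolynomial (Fin (N + 1)) ℂ), IsGeneric (cone X) x ∧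
      AlgebraicIndependent ℂ (Sum.elim t fun k => aeval x (q k)) ∧
      IntermediateField.adjoin ℂ (Set.range x ∪ Set.range t) = ⊤ := by
  have hprime := isPrime_vanishingIdeal hX.2.1
  obtain ⟨τ, hτ⟩ := exists_algebraicIndependent_of_le_adim hX.2.1 (m := n + 1)
    hX.2.2.1.ge
  choose q hq using fun k => Ideal.Quotient.mk_surjective (τ k)
  let A := MvPolynomial (Fin (N + 1)) ℂ ⧸ vanishingIdeal ℂ (cone X)
  let B := MvPolynomial (Fin c) A
  let K := FractionRing B
  have hAB : Function.Injective (algebraMap A K) := by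
    rw [IsScalarTower.algebraMap_eq A B K]
    exact (IsFractionRing.injective B K).comp (MvPolynomial.C_injective _ _)
  let x : Fin (N + 1) → K := fun i => algebraMap A K (Ideal.Quotient.mk _ (MvPolynomial.X i))
  let t : Fin c → K := fun a => algebraMap B K (MvPolynomial.X a)
  have hx : ∀ p, aeval x p = algebraMap A K (Ideal.Quotient.mk _ p) := by
    intro p
    have : (aeval x : MvPolynomial (Fin (N + 1)) ℂ →ₐ[ℂ] K) =
        (IsScalarTower.toAlgHom ℂ A K).comp (Ideal.Quotient.mkₐ ℂ _) := by
      ext i; simp [x]; rfl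
    rw [this]; rfl
  refine ⟨K, inferInstance, inferInstance, x, t, q, ?_, ?_, ?_⟩
  · intro p
    rw [hx, map_eq_zero_iff _ hAB, Ideal.Quotient.eq_zero_iff_mem, mem_vanishingIdeal']
  · have ht : AlgebraicIndependent A t := by
      have := (MvPolynomial.algebraicIndependent_X (Fin c) A).map' (f := IsScalarTower.toAlgHom A B K)
        (IsFractionRing.injective B K)
      exact this
    have := AlgebraicIndependent.sumElim_comp hτ ht
    have e : (fun k => aeval x (q k)) = algebraMap A K ∘ τ := by
      ext k; simp only [hx, hq, Function.comp_apply]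
    rw [e]
    exact this
  · rw [eq_top_iff]
    intro z _
    have hB : ∀ b : B, algebraMap B K b ∈
        IntermediateField.adjoin ℂ (Set.range x ∪ Set.range t) := by
      intro b
      induction b using MvPolynomial.induction_on with
      | C a =>
        obtain ⟨p, rfl⟩ := Ideal.Quotient.mk_surjective a
        have : algebraMap B K (C (Ideal.Quotient.mk _ p)) = aeval x p := (hx p).symm
        rw [this]
        clear this
        induction p using MvPolynomial.induction_on with
        | C a => simpa using IntermediateField.algebraMap_mem _ a
        | add p q hp hq => rw [map_add]; exact add_mem hp hq
        | mul_X p i hp =>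
          rw [map_mul, aeval_X]
          exact mul_mem hp (IntermediateField.subset_adjoin _ _ (Or.inl ⟨i, rfl⟩))
      | add p q hp hq => rw [map_add]; exact add_mem hp hq
      | mul_X p i hp =>
        rw [map_mul]
        exact mul_mem hp (IntermediateField.subset_adjoin _ _ (Or.inr ⟨i, rfl⟩))
    obtain ⟨a, b, -, rfl⟩ := IsFractionRing.div_surjective B z
    exact div_mem (hB a) (hB b)

end DefectSum

/-! ### Relative algebraic closure -/

namespace DefectSum

variable {K : Type} [Field K] [Algebra ℂ K]

/-- The relative algebraic closure in `K` of the field generated over `ℂ` by `S`. -/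
noncomputable def acl (S : Set K) : IntermediateField ℂ K :=
  (algebraicClosure (IntermediateField.adjoin ℂ S) K).restrictScalars ℂ

theorem mem_acl {S : Set K} {a : K} :
    a ∈ acl S ↔ IsAlgebraic (IntermediateField.adjoin ℂ S) a := by
  rw [acl, IntermediateField.mem_restrictScalars, mem_algebraicClosure_iff]

theorem mem_acl' {S : Set K} {a : K} : a ∈ acl S ↔ IsAlgebraic (Algebra.adjoin ℂ S) a := by
  rw [mem_acl, IntermediateField.isAlgebraic_adjoin_iff]

theorem mem_acl_iff_closure {S : Set K} {a : K} :
    a ∈ acl S ↔ a ∈ (AlgebraicIndependent.matroid ℂ K).closure S := by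
  rw [mem_acl', AlgebraicIndependent.matroid_closure_eq]; rfl

theorem subset_acl (S : Set K) : S ⊆ acl S := fun a ha => by
  rw [SetLike.mem_coe, mem_acl_iff_closure]
  exact Matroid.mem_closure_of_mem' _ ha (Set.mem_univ _)

theorem acl_le {S T : Set K} (h : T ⊆ acl S) : acl T ≤ acl S := by
  intro a ha
  rw [mem_acl_iff_closure] at ha ⊢
  refine (Matroid.closure_subset_closure_of_subset_closure ?_) ha
  intro b hb
  exact mem_acl_iff_closure.1 (h hb)

/-- A finite family contains a transcendence basis of the field it generates. -/
theorem exists_independent_subset {ι : Type} [Finite ι] (h : ι → K) :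
    ∃ T : Set ι, AlgebraicIndependent ℂ (fun i : T => h i) ∧ ∀ i, h i ∈ acl (h '' T) := by
  classical
  have hfin : {T : Set ι | AlgebraicIndepOn ℂ h T}.Finite := Set.toFinite _
  obtain ⟨T, hT⟩ := hfin.exists_maximal ⟨∅, by
    exact (algebraicIndependent_empty_type_iff ..).2 (algebraMap ℂ K).injective⟩
  refine ⟨T, hT.1, fun i => ?_⟩
  by_cases hi : i ∈ T
  · exact subset_acl _ ⟨i, hi, rfl⟩
  · rw [mem_acl']
    by_contra hcon
    have h1 := (AlgebraicIndepOn.insert_iff hi).2 ⟨hT.1, hcon⟩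
    exact hi (hT.2 h1 (Set.subset_insert i T) (Set.mem_insert i T))

/-- A family over which `K` is algebraic is independent as soon as it is no larger than some independent
family. -/
theorem algebraicIndependent_of_acl {ι : Type} [Finite ι] {y : ι → K}
    (hy : acl (Set.range y) = ⊤) {m : ℕ} (hm : Nat.card ι ≤ m) {κ : Type} [Finite κ]
    (hκ : m ≤ Nat.card κ) {f : κ → K}
    (hf : AlgebraicIndependent ℂ f) : AlgebraicIndependent ℂ y := by
  have halg : Algebra.IsAlgebraic (Algebra.adjoin ℂ (Set.range y)) K :=
    ⟨fun a => mem_acl'.1 (hy ▸ IntermediateField.mem_top)⟩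
  refine (Algebra.IsAlgebraic.isTranscendenceBasis_of_lift_le_trdeg_of_finite ℂ y ?_).1
  refine le_trans ?_ hf.lift_cardinalMk_le_trdeg
  simp only [Cardinal.lift_id]
  rw [← Nat.cast_card, ← Nat.cast_card]
  exact_mod_cast hm.trans hκ

/-- If `m` algebraically independent elements are algebraic over the field generated by a finite
family `l`, then `m` members of `l` are algebraically independent. -/
theorem exists_independent_subfamily {ι : Type} [Finite ι] {l : ι → K} {m : ℕ} {f : Fin m → K}
    (hf : AlgebraicIndependent ℂ f) (hfl : ∀ k, f k ∈ acl (Set.range l)) :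
    ∃ e : Fin m → ι, AlgebraicIndependent ℂ (l ∘ e) := by
  obtain ⟨T, hT, hTl⟩ := exists_independent_subset l
  have hl : acl (Set.range l) ≤ acl (l '' T) := acl_le (by rintro _ ⟨i, rfl⟩; exact hTl i)
  let M := AlgebraicIndependent.matroid ℂ K
  have h1 : M.Indep (Set.range f) := by
    rw [AlgebraicIndependent.matroid_indep_iff]
    exact AlgebraicIndependent.coe_range hf
  have h2 : Set.range f ⊆ M.closure (l '' T) := by
    rintro _ ⟨k, rfl⟩
    exact mem_acl_iff_closure.1 (hl (hfl k))
  have h3 : (Set.range f).encard ≤ (l '' T).encard := by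
    calc _ ≤ M.eRk (M.closure (l '' T)) := h1.encard_le_eRk_of_subset h2
      _ = M.eRk (l '' T) := M.eRk_closure_eq _
      _ ≤ _ := M.eRk_le_encard _
  have h4 : m ≤ Nat.card T := by
    have e1 : (Set.range f).encard = m := by
      rw [← Set.image_univ, hf.injective.encard_image]; simp
    have e2 : (l '' T).encard ≤ T.encard := Set.encard_image_le _ _
    have := e1 ▸ h3.trans e2
    rw [← (Set.toFinite T).cast_ncard_eq] at this
    exact_mod_cast this
  have : Fintype T := Fintype.ofFinite _
  obtain ⟨e⟩ : Nonempty (Fin m ↪ T) := by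
    rw [Function.Embedding.nonempty_iff_card_le]
    rw [← Nat.card_eq_fintype_card, ← Nat.card_eq_fintype_card, Nat.card_fin]; exact h4
  exact ⟨fun k => e k, hT.comp e e.injective⟩

/-- A derivation that maps `S` into its algebraic closure preserves this closure, as one sees by
differentiating a minimal polynomial. -/
theorem derivation_mem_acl (D : Derivation ℂ K K) {S : Set K} (hS : ∀ a ∈ S, D a ∈ acl S) :
    ∀ a ∈ acl S, D a ∈ acl S := by
  have hF : ∀ a ∈ IntermediateField.adjoin ℂ S, D a ∈ acl S := by
    intro a ha
    have hle : IntermediateField.adjoin ℂ S ≤ acl S :=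
      IntermediateField.adjoin_le_iff.2 (subset_acl S)
    induction ha using IntermediateField.adjoin_induction with
    | mem a ha => exact hS a ha
    | algebraMap c => rw [Derivation.map_algebraMap]; exact zero_mem _
    | add a b _ _ ha hb => rw [map_add]; exact add_mem ha hb
    | inv a ha h =>
      rw [Derivation.leibniz_inv, smul_eq_mul]
      exact mul_mem (neg_mem (pow_mem (inv_mem (hle ha)) 2)) h
    | mul a b hha hhb ha hb =>
      rw [Derivation.leibniz, smul_eq_mul, smul_eq_mul]
      exact add_mem (mul_mem (hle hha) hb) (mul_mem (hle hhb) ha)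
  intro a ha
  have ha' := mem_acl.1 ha
  have key : ∀ f : Polynomial (IntermediateField.adjoin ℂ S),
      D (Polynomial.aeval a f) - Polynomial.aeval a (Polynomial.derivative f) * D a ∈ acl S := by
    intro f
    induction f using Polynomial.induction_on' with
    | add p q hp hq =>
      have := add_mem hp hq
      convert this using 1
      simp only [map_add]; ring
    | monomial k c =>
      have h1 : D (Polynomial.aeval a (Polynomial.monomial k c)) -
          Polynomial.aeval a (Polynomial.derivative (Polynomial.monomial k c)) * D a =
          a ^ k * D (c : K) := by
        rw [Polynomial.aeval_monomial, Polynomial.derivative_monomial, Polynomial.aeval_monomial,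
          Derivation.leibniz, Derivation.leibniz_pow]
        simp [IntermediateField.algebraMap_apply]
        ring
      rw [h1]
      exact mul_mem (pow_mem ha k) (hF _ c.2)
  have hai : IsIntegral (IntermediateField.adjoin ℂ S) a := ha'.isIntegral
  have h1 := key (minpoly _ a)
  rw [minpoly.aeval, map_zero, zero_sub] at h1
  have hsep : Polynomial.aeval a (Polynomial.derivative (minpoly (IntermediateField.adjoin ℂ S) a))
      ≠ 0 := by
    have : CharZero (IntermediateField.adjoin ℂ S) := by
      exact charZero_of_injective_algebraMap (algebraMap ℂ _).injective
    exact (minpoly.irreducible hai).separable.aeval_derivative_ne_zero (minpoly.aeval _ _)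
  have h2 : Polynomial.aeval a (Polynomial.derivative (minpoly (IntermediateField.adjoin ℂ S) a))
      ∈ acl S := by
    rw [acl, IntermediateField.mem_restrictScalars]
    have h3 : Algebra.adjoin (IntermediateField.adjoin ℂ S) {a} ≤
        (algebraicClosure (IntermediateField.adjoin ℂ S) K).toSubalgebra :=
      Algebra.adjoin_le (Set.singleton_subset_iff.2 (mem_algebraicClosure_iff.2 ha'))
    exact h3 (Polynomial.aeval_mem_adjoin_singleton _ _)
  have := mul_mem (inv_mem h2) (neg_mem h1)
  rwa [neg_neg, inv_mul_cancel_left₀ hsep] at this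

end DefectSum

/-! ### Linearity of the contact loci -/

namespace DefectSum

variable {N : ℕ} {K : Type} [Field K] [Algebra ℂ K]

/-- The linear structure of the conormal variety over the dual variety, at a generic conormal
vector `(x, h)`. The coordinates of `h` lie in a finitely generated subalgebra `Rs`, as `h'`, and one
of them is a unit there; those with index in `T` are algebraically independent. The point `x` is
the linear combination, with coefficients `β` in `Rs`, of its coordinates `x j`, `j ∉ T`, and these
are algebraically independent over `Rs`. A homomorphism `Rs → ℂ` thus specializes the hyperplane `h`
together with the linear space of its points of contact. -/
structure Contact (x h : Fin (N + 1) → K) where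
  T : Finset (Fin (N + 1))
  Rs : Subalgebra ℂ K
  fg : Rs.FG
  β : Fin (N + 1) → {j // j ∉ T} → Rs
  h' : Fin (N + 1) → Rs
  coe_h : ∀ i, (h' i : K) = h i
  indep_h : AlgebraicIndependent ℂ (fun i : T => h i)
  x_eq : ∀ k, x k = ∑ j, (β k j : K) * x j
  β_self : ∀ j : {j // j ∉ T}, β j = Pi.single j 1
  indep_x : AlgebraicIndependent Rs (fun j : {j // j ∉ T} => x j)
  unit : ∃ i, IsUnit (h' i)

/-- Contact loci are linear. Differentiating `∑ h_i x_i = 0` with respect to the independent coordinates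
`h_i`, `i ∈ T`, and using `∑ h_i dx_i = 0` expresses each `x_i`, `i ∈ T`, linearly in the remaining
coordinates, with coefficients algebraic over `ℂ(h)`. A count of transcendence degrees makes the
remaining coordinates independent over these coefficients. -/
theorem exists_contact {x h : Fin (N + 1) → K} (hD : ∀ D : Derivation ℂ K K, ∑ i, h i * D (x i) = 0)
    (hx : ∑ i, h i * x i = 0) (h0 : ∃ i, h i ≠ 0)
    (htop : acl (Set.range h ∪ Set.range x) = ⊤) {κ : Type} [Finite κ] (hκ : N + 1 ≤ Nat.card κ)
    {f : κ → K} (hf : AlgebraicIndependent ℂ f) : Nonempty (Contact x h) := by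
  classical
  obtain ⟨T', hT', hTh'⟩ := exists_independent_subset h
  obtain ⟨T, rfl⟩ : ∃ T : Finset (Fin (N + 1)), (T : Set _) = T' :=
    ⟨T'.toFinite.toFinset, by simp⟩
  have hT : AlgebraicIndependent ℂ (fun i : T => h i) := hT'
  have hTh : ∀ i, h i ∈ acl (h '' T) := hTh'
  choose D hDT using fun i : T => exists_derivation hT (Pi.single i (1 : K))
  have hDmem : ∀ (i : T) k, D i (h k) ∈ acl (h '' T) := by
    intro i k
    refine derivation_mem_acl (D i) ?_ _ (hTh k)
    rintro _ ⟨l, hl, rfl⟩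
    rw [hDT i ⟨l, hl⟩, Pi.single_apply]
    split_ifs
    · exact one_mem _
    · exact zero_mem _
  have hDx : ∀ i : T, x i = ∑ j : {j // j ∉ T}, -D i (h j) * x j := by
    intro i
    have h1 := congrArg (D i) hx
    rw [map_sum, map_zero] at h1
    simp only [Derivation.leibniz, smul_eq_mul, Finset.sum_add_distrib, hD (D i), zero_add] at h1
    have h2 : ∑ k, x k * D i (h k) = ∑ k : T, x k * D i (h k) +
        ∑ j : {j // j ∉ T}, x j * D i (h j) := by
      rw [← Fintype.sum_subtype_add_sum_subtype (· ∈ T) (fun k => x k * D i (h k))]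
      congr!
    rw [h2] at h1
    simp only [hDT i, Pi.single_apply, mul_ite, mul_one, mul_zero, Finset.sum_ite_eq',
      Finset.mem_univ, if_true] at h1
    rw [eq_neg_of_add_eq_zero_left h1, ← Finset.sum_neg_distrib]
    exact Finset.sum_congr rfl fun j _ => by ring
  let b : Fin (N + 1) → {j // j ∉ T} → K := fun k j =>
    if hk : k ∈ T then -D ⟨k, hk⟩ (h j) else (Pi.single ⟨k, hk⟩ 1 : {j // j ∉ T} → K) j
  have hb_mem : ∀ k j, b k j ∈ acl (h '' T) := by
    intro k j
    simp only [b]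
    split_ifs with hk
    · exact neg_mem (hDmem _ _)
    · rw [Pi.single_apply]
      split_ifs
      · exact one_mem _
      · exact zero_mem _
  have hbx : ∀ k, x k = ∑ j, b k j * x j := by
    intro k
    by_cases hk : k ∈ T
    · simp only [b, hk, dite_true]
      exact hDx ⟨k, hk⟩
    · simp [b, hk, Pi.single_apply]
  -- the conormal variety has dimension `N + 1`, the number of coordinates `x_J`, `h_T`
  have hind : AlgebraicIndependent ℂ
      (Sum.elim (fun j : {j // j ∉ T} => x j) (fun i : T => h i)) := by
    refine algebraicIndependent_of_acl ?_ (m := N + 1) ?_ hκ hf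
    · rw [eq_top_iff, ← htop]
      have hh : acl (h '' T) ≤ acl (Set.range
          (Sum.elim (fun j : {j // j ∉ T} => x j) (fun i : T => h i))) := by
        apply acl_le
        rintro _ ⟨i, hi, rfl⟩
        exact subset_acl _ ⟨Sum.inr ⟨i, hi⟩, rfl⟩
      apply acl_le
      rintro _ (⟨i, rfl⟩ | ⟨i, rfl⟩)
      · exact hh (hTh i)
      · rw [SetLike.mem_coe, hbx i]
        exact sum_mem fun j _ => mul_mem (hh (hb_mem i j)) (subset_acl _ ⟨Sum.inl j, rfl⟩)
    · rw [Nat.card_sum, Nat.card_eq_fintype_card, Nat.card_eq_fintype_card,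
        Fintype.card_subtype_compl, Fintype.card_fin, Fintype.card_coe]
      have := Finset.card_le_univ T
      rw [Fintype.card_fin] at this
      omega
  rw [AlgebraicIndependent.sumElim_iff] at hind
  obtain ⟨i₀, hi₀⟩ := h0
  let S : Set K := Set.range h ∪ Set.range (fun kj : Fin (N + 1) × {j // j ∉ T} => b kj.1 kj.2) ∪
    {(h i₀)⁻¹}
  have hSfin : S.Finite := ((Set.finite_range _).union (Set.finite_range _)).union
    (Set.finite_singleton _)
  have hrange : Set.range (fun i : T => h i) = h '' T := by
    ext a; simp
  have hS : Algebra.adjoin ℂ S ≤ (acl (h '' T)).toSubalgebra := by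
    apply Algebra.adjoin_le
    rintro _ ((⟨i, rfl⟩ | ⟨i, rfl⟩) | rfl)
    · exact hTh i
    · exact hb_mem _ _
    · exact (acl (h '' T)).inv_mem (hTh i₀)
  have hSalg : ∀ a ∈ Algebra.adjoin ℂ S, a ∈
      Subalgebra.algebraicClosure (Algebra.adjoin ℂ (Set.range fun i : T => h i)) K := by
    intro a ha
    rw [hrange]
    exact mem_acl'.1 (hS ha)
  refine ⟨⟨T, Algebra.adjoin ℂ S, ⟨hSfin.toFinset, by simp⟩,
    fun k j => ⟨b k j, Algebra.subset_adjoin (Or.inl (Or.inr ⟨(k, j), rfl⟩))⟩,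
    fun i => ⟨h i, Algebra.subset_adjoin (Or.inl (Or.inl ⟨i, rfl⟩))⟩, fun _ => rfl, hT, hbx, ?_, ?_,
    i₀, ?_⟩⟩
  · intro j
    ext l
    simp only [b, j.2, dite_false, Pi.single_apply]
    split_ifs <;> rfl
  · have h1 := hind.2.subalgebraAlgebraicClosure
    let ι : Algebra.adjoin ℂ S →+* Subalgebra.algebraicClosure
        (Algebra.adjoin ℂ (Set.range fun i : T => h i)) K :=
      { toFun := fun a => ⟨a, hSalg a a.2⟩
        map_one' := rfl
        map_mul' := fun _ _ => rfl
        map_zero' := rfl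
        map_add' := fun _ _ => rfl }
    let : Algebra (Algebra.adjoin ℂ S) (Subalgebra.algebraicClosure
        (Algebra.adjoin ℂ (Set.range fun i : T => h i)) K) := ι.toAlgebra
    have : IsScalarTower (Algebra.adjoin ℂ S) (Subalgebra.algebraicClosure
        (Algebra.adjoin ℂ (Set.range fun i : T => h i)) K) K :=
      IsScalarTower.of_algebraMap_eq fun _ => rfl
    refine h1.restrictScalars ?_
    intro a b hab
    exact Subtype.ext (show (a : K) = b from (Subtype.ext_iff.1 hab : (ι a : K) = ι b))
  · refine IsUnit.of_mul_eq_one ⟨(h i₀)⁻¹, Algebra.subset_adjoin (Or.inr rfl)⟩ ?_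
    exact Subtype.ext (mul_inv_cancel₀ hi₀)

end DefectSum

/-! ### The generic conormal vector -/

namespace DefectSum

variable {N : ℕ} {K : Type} [Field K] [Algebra ℂ K]

theorem aeval_mem_intermediateField {σ : Type} {x : σ → K} {E : IntermediateField ℂ K}
    (hx : ∀ i, x i ∈ E) (p : MvPolynomial σ ℂ) : aeval x p ∈ E := by
  have h1 : aeval x p ∈ Algebra.adjoin ℂ (Set.range x) := by
    rw [Algebra.adjoin_range_eq_range_aeval]; exact ⟨p, rfl⟩
  have h2 : Algebra.adjoin ℂ (Set.range x) ≤ E.toSubalgebra :=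
    Algebra.adjoin_le (by rintro _ ⟨i, rfl⟩; exact hx i)
  exact h2 h1

theorem det_mem_intermediateField {c : ℕ} {E : IntermediateField ℂ K} {M : Matrix (Fin c) (Fin c) K}
    (hM : ∀ i j, M i j ∈ E) : M.det ∈ E := by
  rw [Matrix.det_apply']
  exact sum_mem fun σ _ => mul_mem (intCast_mem _ _) (prod_mem fun i _ => hM _ _)

/-- The vector of the generic tangent hyperplane: the combination of the differentials of the
equations `p` at `x` with coefficients `t`. -/
noncomputable def conormal {c : ℕ} (p : Fin c → MvPolynomial (Fin (N + 1)) ℂ) (x : Fin (N + 1) → K)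
    (t : Fin c → K) (i : Fin (N + 1)) : K :=
  ∑ a, t a * grad p x i a

/-- The generic tangent hyperplane passes through the generic point. -/
theorem sum_conormal_mul {X : Set (Proj N)} {c : ℕ} {x : Fin (N + 1) → K} (t : Fin c → K)
    (hx : IsGeneric (cone X) x) {p : Fin c → MvPolynomial (Fin (N + 1)) ℂ}
    (hp : ∀ a, p a ∈ vanishingIdeal ℂ (cone X)) : ∑ i, conormal p x t i * x i = 0 := by
  simp only [conormal, Finset.sum_mul]
  rw [Finset.sum_comm]
  refine Finset.sum_eq_zero fun a _ => ?_
  have := euler hx (hp a)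
  simp only [mul_assoc, ← Finset.mul_sum]
  simp only [grad, Matrix.of_apply, this, mul_zero]

/-- The hypotheses of `exists_contact` hold for the generic conormal vector: its pairing with `dx`
vanishes because the equations do, its pairing with `x` vanishes by Euler's relation, and `t` can be
recovered from `x` and the conormal vector. -/
theorem exists_contact_conormal {X : Set (Proj N)} {n c : ℕ} (hc : c + n = N) (hc0 : 0 < c)
    {x : Fin (N + 1) → K} {t : Fin c → K} {q : Fin (n + 1) → MvPolynomial (Fin (N + 1)) ℂ}
    (hx : IsGeneric (cone X) x) (hq : AlgebraicIndependent ℂ (Sum.elim t fun k => aeval x (q k)))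
    (htop : IntermediateField.adjoin ℂ (Set.range x ∪ Set.range t) = ⊤)
    {p : Fin c → MvPolynomial (Fin (N + 1)) ℂ} (hp : ∀ a, p a ∈ vanishingIdeal ℂ (cone X))
    {Λ : Matrix (Fin c) (Fin (N + 1)) ℂ} (hΛ : aeval x (frameDet p Λ) ≠ 0) :
    Nonempty (Contact x (conormal p x t)) := by
  classical
  rw [aeval_frameDet] at hΛ
  set M : Matrix (Fin c) (Fin c) K := Λ.map (algebraMap ℂ K) * grad p x with hM
  have hpx : ∀ a, aeval x (p a) = 0 := fun a => (hx _).2 (mem_vanishingIdeal'.1 (hp a))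
  have hht : conormal p x t = (grad p x).mulVec t := by
    ext i; simp [conormal, Matrix.mulVec, dotProduct, mul_comm]
  have hMt : M.mulVec t = (Λ.map (algebraMap ℂ K)).mulVec (conormal p x t) := by
    rw [hM, hht, Matrix.mulVec_mulVec]
  refine exists_contact (κ := Fin c ⊕ Fin (n + 1)) (f := Sum.elim t fun k => aeval x (q k))
    ?_ ?_ ?_ ?_ ?_ hq
  · intro D
    have h1 : ∀ a, ∑ i, grad p x i a * D (x i) = 0 := by
      intro a
      have := derivation_aeval D x (p a)
      rw [hpx, map_zero] at this
      simpa [grad] using this.symm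
    simp only [conormal, Finset.sum_mul]
    rw [Finset.sum_comm]
    apply Finset.sum_eq_zero
    intro a _
    simp only [mul_assoc, ← Finset.mul_sum, h1, mul_zero]
  · exact sum_conormal_mul t hx hp
  · by_contra! hcon
    have h1 : conormal p x t = 0 := funext hcon
    rw [h1, Matrix.mulVec_zero] at hMt
    have h2 := Matrix.eq_zero_of_mulVec_eq_zero hΛ hMt
    exact hq.ne_zero (Sum.inl ⟨0, hc0⟩) (congrFun h2 _)
  · set E := acl (Set.range (conormal p x t) ∪ Set.range x) with hE
    have hxE : ∀ i, x i ∈ E := fun i => subset_acl _ (Or.inr ⟨i, rfl⟩)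
    have hhE : ∀ i, conormal p x t i ∈ E := fun i => subset_acl _ (Or.inl ⟨i, rfl⟩)
    have hME : ∀ a b, M a b ∈ E := fun a b => by
      rw [hM, Matrix.mul_apply]
      refine sum_mem fun i _ => mul_mem ?_ (aeval_mem_intermediateField hxE _)
      rw [Matrix.map_apply]; exact E.algebraMap_mem _
    have hMtE : ∀ a, M.mulVec t a ∈ E := fun a => by
      rw [hMt]
      simp only [Matrix.mulVec, dotProduct]
      refine sum_mem fun i _ => mul_mem ?_ (hhE i)
      rw [Matrix.map_apply]; exact E.algebraMap_mem _
    -- Cramer's rule recovers `t` from `x` and the conormal vector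
    have htE : ∀ a, t a ∈ E := fun a => by
      have h1 : M.det * t a = (M.updateCol a (M.mulVec t)).det := by
        rw [← Matrix.cramer_apply, Matrix.cramer_eq_adjugate_mulVec, Matrix.mulVec_mulVec,
          Matrix.adjugate_mul, Matrix.smul_mulVec, Matrix.one_mulVec, Pi.smul_apply, smul_eq_mul]
      have h2 : (M.updateCol a (M.mulVec t)).det ∈ E := det_mem_intermediateField fun i j => by
        rw [Matrix.updateCol_apply]
        split_ifs
        · exact hMtE i
        · exact hME i j
      rw [← h1] at h2
      have := mul_mem (inv_mem (det_mem_intermediateField hME)) h2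
      rwa [inv_mul_cancel_left₀ hΛ] at this
    rw [eq_top_iff, ← htop, IntermediateField.adjoin_le_iff]
    rintro _ (⟨i, rfl⟩ | ⟨a, rfl⟩)
    · exact hxE i
    · exact htE a
  · rw [Nat.card_sum, Nat.card_fin, Nat.card_fin]; omega

end DefectSum

/-! ### Specializing the tangent hyperplane -/

namespace DefectSum

/-- Weak Nullstellensatz: a nonzero finitely generated `ℂ`-algebra has a complex point. -/
theorem exists_algHom (A : Type) [CommRing A] [Nontrivial A] [Algebra ℂ A]
    [Algebra.FiniteType ℂ A] : Nonempty (A →ₐ[ℂ] ℂ) := by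
  obtain ⟨m, hm⟩ := Ideal.exists_maximal A
  let _ : Field (A ⧸ m) := Ideal.Quotient.field m
  have : Algebra.FiniteType ℂ (A ⧸ m) :=
    .of_surjective (Ideal.Quotient.mkₐ ℂ m) (Ideal.Quotient.mkₐ_surjective ℂ m)
  have hfin : Module.Finite ℂ (A ⧸ m) := finite_of_finite_type_of_isJacobsonRing ℂ (A ⧸ m)
  have hbij := IsAlgClosed.algebraMap_bijective_of_isIntegral (k := ℂ) (K := A ⧸ m)
  exact ⟨((AlgEquiv.ofBijective (Algebra.ofId ℂ (A ⧸ m)) hbij).symm : (A ⧸ m) →ₐ[ℂ] ℂ).comp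
    (Ideal.Quotient.mkₐ ℂ m)⟩

/-- Complex points of a finitely generated domain separate its elements. -/
theorem exists_algHom_ne_zero {A : Type} [CommRing A] [IsDomain A] [Algebra ℂ A]
    [Algebra.FiniteType ℂ A] {f : A} (hf : f ≠ 0) : ∃ φ : A →ₐ[ℂ] ℂ, φ f ≠ 0 := by
  have h1 : Algebra.FiniteType A (Localization.Away f) := inferInstance
  have h2 : Algebra.FiniteType ℂ (Localization.Away f) := .trans (S := A) inferInstance h1
  have : IsDomain (Localization.Away f) :=
    IsLocalization.isDomain_localization (powers_le_nonZeroDivisors_of_noZeroDivisors hf)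
  obtain ⟨φ⟩ := exists_algHom (Localization.Away f)
  refine ⟨φ.comp (IsScalarTower.toAlgHom ℂ A (Localization.Away f)), ?_⟩
  have h3 : IsUnit (algebraMap A (Localization.Away f) f) :=
    IsLocalization.map_units _ (⟨f, Submonoid.mem_powers f⟩ : Submonoid.powers f)
  exact (h3.map φ).ne_zero

namespace Contact

variable {N : ℕ} {K : Type} [Field K] [Algebra ℂ K] {x h : Fin (N + 1) → K}

/-- The vector with affine coordinates `u` in the contact locus of the hyperplane obtained by
specializing the generic tangent hyperplane along `φ`. -/
noncomputable def lin (Ct : Contact x h) (φ : Ct.Rs →ₐ[ℂ] ℂ) {B : Type} [CommRing B] [Algebra ℂ B]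
    (u : {j // j ∉ Ct.T} → B) (k : Fin (N + 1)) : B :=
  ∑ j, algebraMap ℂ B (φ (Ct.β k j)) * u j

/-- Relations between the generic point and the generic conormal vector specialize to the
contact locus of any specialization of the hyperplane. -/
theorem aeval_lin (Ct : Contact x h) (φ : Ct.Rs →ₐ[ℂ] ℂ) {B : Type} [CommRing B] [Algebra ℂ B]
    (u : {j // j ∉ Ct.T} → B) (Q : MvPolynomial (Fin (N + 1) ⊕ Fin (N + 1)) ℂ)
    (hQ : aeval (Sum.elim x h) Q = 0) :
    aeval (Sum.elim (Ct.lin φ u) fun i => algebraMap ℂ B (φ (Ct.h' i))) Q = 0 := by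
  set P : MvPolynomial {j // j ∉ Ct.T} Ct.Rs :=
    aeval (Sum.elim (fun k => ∑ j, C (Ct.β k j) * X j) fun i => C (Ct.h' i)) Q with hP
  have h1 : P = 0 := by
    apply Ct.indep_x
    rw [map_zero, hP, ← AlgHom.coe_restrictScalars' ℂ, ← AlgHom.comp_apply, comp_aeval, ← hQ]
    congr 2
    ext (k | i)
    · simp only [Function.comp_apply, Sum.elim_inl, AlgHom.coe_restrictScalars', map_sum, map_mul,
        aeval_X, algHom_C]
      exact (Ct.x_eq k).symm
    · simp only [Function.comp_apply, Sum.elim_inr, AlgHom.coe_restrictScalars', algHom_C]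
      exact Ct.coe_h i
  have h2 : eval₂ ((algebraMap ℂ B).comp φ.toRingHom) u P = 0 := by rw [h1, eval₂_zero]
  rw [← h2, hP]
  have key : ∀ Q : MvPolynomial (Fin (N + 1) ⊕ Fin (N + 1)) ℂ,
      aeval (Sum.elim (Ct.lin φ u) fun i => algebraMap ℂ B (φ (Ct.h' i))) Q =
      eval₂ ((algebraMap ℂ B).comp φ.toRingHom) u (aeval (Sum.elim (fun k => ∑ j, C (Ct.β k j) * X j)
        fun i => C (Ct.h' i) : _ → MvPolynomial {j // j ∉ Ct.T} Ct.Rs) Q) := by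
    intro Q
    induction Q using MvPolynomial.induction_on with
    | C a =>
      rw [algHom_C, algHom_C, MvPolynomial.algebraMap_apply, eval₂_C]
      simp
    | add p q hp hq => simp only [map_add, eval₂_add, hp, hq]
    | mul_X p j hp =>
      rw [map_mul, map_mul, eval₂_mul, hp]
      congr 1
      rcases j with k | i
      · simp [lin, eval₂_sum]
      · simp
  exact key Q

theorem finiteType (Ct : Contact x h) : Algebra.FiniteType ℂ Ct.Rs :=
  (Subalgebra.fg_iff_finiteType _).1 Ct.fg

theorem eq_zero_of_forall (Ct : Contact x h) {f : Ct.Rs} (hf : ∀ φ : Ct.Rs →ₐ[ℂ] ℂ, φ f = 0) :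
    f = 0 := by
  have := Ct.finiteType
  by_contra hcon
  obtain ⟨φ, hφ⟩ := exists_algHom_ne_zero hcon
  exact hφ (hf φ)

theorem lin_self (Ct : Contact x h) (φ : Ct.Rs →ₐ[ℂ] ℂ) {B : Type} [CommRing B] [Algebra ℂ B]
    (u : {j // j ∉ Ct.T} → B) (j : {j // j ∉ Ct.T}) : Ct.lin φ u j = u j := by
  rw [lin, Finset.sum_eq_single j]
  · simp [Ct.β_self]
  · intro k _ hk; simp [Ct.β_self, hk]
  · simp

theorem aeval_lin_eq_zero (Ct : Contact x h) (φ : Ct.Rs →ₐ[ℂ] ℂ) {B : Type} [CommRing B]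
    [Algebra ℂ B] (u : {j // j ∉ Ct.T} → B) {p : MvPolynomial (Fin (N + 1)) ℂ}
    (hp : aeval x p = 0) : aeval (Ct.lin φ u) p = 0 := by
  have := Ct.aeval_lin φ u (rename Sum.inl p) (by rw [aeval_rename]; exact hp)
  rwa [aeval_rename] at this

/-- The contact locus of every specialized hyperplane is contained in the cone. -/
theorem lin_mem (Ct : Contact x h) (φ : Ct.Rs →ₐ[ℂ] ℂ) {V : Set (Aff N)} (hV : zClosed V)
    (hx : IsGeneric V x) (u : {j // j ∉ Ct.T} → ℂ) : Ct.lin φ u ∈ V := by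
  rw [← zeroLocus_vanishingIdeal hV, mem_zeroLocus']
  intro p hp
  rw [eval_eq_aeval]
  exact Ct.aeval_lin_eq_zero φ u ((hx p).2 (mem_vanishingIdeal'.1 hp))

/-- The contact locus lies in its hyperplane. -/
theorem sum_h_lin (Ct : Contact x h) (hxh : ∑ i, h i * x i = 0) (φ : Ct.Rs →ₐ[ℂ] ℂ) {B : Type}
    [CommRing B] [Algebra ℂ B] (u : {j // j ∉ Ct.T} → B) :
    ∑ i, algebraMap ℂ B (φ (Ct.h' i)) * Ct.lin φ u i = 0 := by
  have := Ct.aeval_lin φ u (∑ i, X (Sum.inr i) * X (Sum.inl i)) (by simpa using hxh)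
  simpa using this

theorem exists_specialization (Ct : Contact x h) :
    ∃ φ : Ct.Rs →ₐ[ℂ] ℂ, ∃ i, φ (Ct.h' i) ≠ 0 := by
  have := Ct.finiteType
  obtain ⟨φ⟩ := exists_algHom Ct.Rs
  obtain ⟨i, hi⟩ := Ct.unit
  exact ⟨φ, i, (hi.map φ).ne_zero⟩

end Contact
end DefectSum

/-! ### Dimension of the dual variety -/

namespace DefectSum

variable {N : ℕ} {K : Type} [Field K] [Algebra ℂ K]

theorem zClosed_cone_dualVar (X : Set (Proj N)) : zClosed (cone (dualVar X)) := by
  rw [dualVar, cone_pClosure]; exact zClosed_zClosure _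

/-- The generic conormal vector is a point of the dual variety. -/
theorem zeroLocus_ker_conormal {X : Set (Proj N)} {c : ℕ} {x : Fin (N + 1) → K} (t : Fin c → K)
    (hx : IsGeneric (cone X) x) (hV : ∃ v ∈ cone X, v ≠ 0)
    {p : Fin c → MvPolynomial (Fin (N + 1)) ℂ} (hp : ∀ a, p a ∈ vanishingIdeal ℂ (cone X)) :
    zeroLocus ℂ (RingHom.ker (aeval (conormal p x t) : MvPolynomial (Fin (N + 1)) ℂ →ₐ[ℂ] K)) ⊆
      cone (dualVar X) := by
  rw [← zeroLocus_vanishingIdeal (zClosed_cone_dualVar X)]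
  intro v hv
  rw [mem_zeroLocus'] at hv ⊢
  intro q hq
  apply hv
  rw [RingHom.mem_ker]
  set Q : MvPolynomial (Fin c ⊕ Fin (N + 1)) ℂ :=
    aeval (fun i => ∑ a, MvPolynomial.X (Sum.inl a) * rename Sum.inr (pderiv i (p a))) q with hQ
  have key : ∀ {B : Type} [CommRing B] [Algebra ℂ B] (t : Fin c → B) (x : Fin (N + 1) → B),
      aeval (Sum.elim t x) Q = aeval (fun i => ∑ a, t a * aeval x (pderiv i (p a))) q := by
    intro B _ _ t x
    rw [hQ, ← AlgHom.comp_apply, comp_aeval]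
    congr 2
    ext i
    simp only [map_sum, map_mul, aeval_X, Sum.elim_inl, aeval_rename]
    rfl
  have h0 := aeval_eq_zero_of_generic hx hV t Q ?_
  · rw [key] at h0
    exact h0
  intro v hv hv0 w
  rw [eval_eq_aeval, key, ← eval_eq_aeval]
  refine mem_vanishingIdeal'.1 hq _ (mem_cone_dualVar hv hv0 ?_)
  intro u hu
  have hu' : ∀ a, ∑ i, eval v (pderiv i (p a)) * u i = 0 := by
    intro a
    have h1 : u ∈ LinearMap.ker (polyDiff v (p a)) := by
      have h2 : p a ∈ vanishSet (cone X) := mem_vanishingIdeal'.1 (hp a)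
      exact (iInf₂_le (p a) h2 : tangentAt (cone X) v ≤ _) hu
    simpa [polyDiff] using h1
  simp only [hypSub, LinearMap.mem_ker, LinearMap.sum_apply, LinearMap.smul_apply,
    LinearMap.proj_apply, smul_eq_mul, Finset.sum_mul]
  rw [Finset.sum_comm]
  refine Finset.sum_eq_zero fun a _ => ?_
  simp only [mul_assoc, ← Finset.mul_sum, ← eval_eq_aeval, hu', mul_zero]

/-- The coordinates `h i`, `i ∈ T`, are independent functions on the dual cone. -/
theorem card_T_le_adim {X : Set (Proj N)} {c : ℕ} {x : Fin (N + 1) → K} {t : Fin c → K}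
    (hx : IsGeneric (cone X) x) (hV : ∃ v ∈ cone X, v ≠ 0)
    {p : Fin c → MvPolynomial (Fin (N + 1)) ℂ} (hp : ∀ a, p a ∈ vanishingIdeal ℂ (cone X))
    (Ct : Contact x (conormal p x t)) : (Ct.T.card : WithBot ℕ∞) ≤ adim (cone (dualVar X)) := by
  have := card_le_adim (aeval (conormal p x t)) (fun i : Ct.T => MvPolynomial.X (i : Fin (N + 1)))
    (by simpa using Ct.indep_h) (zeroLocus_ker_conormal t hx hV hp)
  simpa using this

end DefectSum

/-! ### Tangent vectors along a contact locus -/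

namespace DefectSum

variable {N : ℕ}

/-- The defect of `h` from lying in the column span of the Jacobian of `p`, cleared of
denominators by Cramer's rule. -/
noncomputable def cramerDefect {B : Type} [CommRing B] [Algebra ℂ B] {c : ℕ}
    (p : Fin c → MvPolynomial (Fin (N + 1)) ℂ) (Λ : Matrix (Fin c) (Fin (N + 1)) ℂ)
    (x h : Fin (N + 1) → B) : Fin (N + 1) → B :=
  (Λ.map (algebraMap ℂ B) * grad p x).det • h - (grad p x).mulVec
    ((Λ.map (algebraMap ℂ B) * grad p x).adjugate.mulVec ((Λ.map (algebraMap ℂ B)).mulVec h))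

theorem map_cramerDefect {A B : Type} [CommRing A] [Algebra ℂ A] [CommRing B] [Algebra ℂ B] {c : ℕ}
    (f : A →ₐ[ℂ] B) (p : Fin c → MvPolynomial (Fin (N + 1)) ℂ)
    (Λ : Matrix (Fin c) (Fin (N + 1)) ℂ) (x h : Fin (N + 1) → A) (i : Fin (N + 1)) :
    f (cramerDefect p Λ x h i) = cramerDefect p Λ (f ∘ x) (f ∘ h) i := by
  have h1 : (grad p x).map f = grad p (f ∘ x) := by
    ext i a
    simp only [grad, Matrix.map_apply, Matrix.of_apply]
    rw [← AlgHom.comp_apply, comp_aeval]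
    rfl
  have h2 : (Λ.map (algebraMap ℂ A)).map f = Λ.map (algebraMap ℂ B) := by
    ext a i; simp
  have h3 : (Λ.map (algebraMap ℂ A) * grad p x).map f =
      Λ.map (algebraMap ℂ B) * grad p (f ∘ x) := by
    rw [Matrix.map_mul, h1, h2]
  have h4 := f.map_adjugate (Λ.map (algebraMap ℂ A) * grad p x)
  rw [AlgHom.mapMatrix_apply, AlgHom.mapMatrix_apply, h3] at h4
  have h5 := f.map_det (Λ.map (algebraMap ℂ A) * grad p x)
  rw [AlgHom.mapMatrix_apply, h3] at h5
  have hv : ∀ {a b : Type} [Fintype b] (M : Matrix a b A) (v : b → A),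
      f ∘ M.mulVec v = (M.map f).mulVec (f ∘ v) := by
    intro a b _ M v
    ext i
    exact RingHom.map_mulVec f.toRingHom M v i
  have e1 := hv (Λ.map (algebraMap ℂ A)) h
  rw [h2] at e1
  have e2 := hv (Λ.map (algebraMap ℂ A) * grad p x).adjugate ((Λ.map (algebraMap ℂ A)).mulVec h)
  rw [h4, e1] at e2
  have e3 := congrFun (hv (grad p x) ((Λ.map (algebraMap ℂ A) * grad p x).adjugate.mulVec
    ((Λ.map (algebraMap ℂ A)).mulVec h))) i
  rw [h1, e2] at e3
  simp only [cramerDefect, Pi.sub_apply, Pi.smul_apply, smul_eq_mul, map_sub, map_mul, h5]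
  rw [← e3]
  rfl

theorem cramerDefect_mulVec {B : Type} [CommRing B] [Algebra ℂ B] {c : ℕ}
    (p : Fin c → MvPolynomial (Fin (N + 1)) ℂ) (Λ : Matrix (Fin c) (Fin (N + 1)) ℂ)
    (x : Fin (N + 1) → B) (μ : Fin c → B) :
    cramerDefect p Λ x ((grad p x).mulVec μ) = 0 := by
  rw [cramerDefect, Matrix.mulVec_mulVec _ (Λ.map _), Matrix.mulVec_mulVec _ (Matrix.adjugate _),
    Matrix.adjugate_mul, Matrix.smul_mulVec, Matrix.one_mulVec, Matrix.mulVec_smul, sub_self]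

/-- Smoothness at a nonzero point of the cone with coordinates in an extension field, deduced from
smoothness at complex points by the Nullstellensatz. -/
theorem exists_frame {κ : Type} [Field κ] [Algebra ℂ κ] {X : Set (Proj N)} {n c : ℕ}
    (hX : SmoothVariety X n) (hc : c + n = N) {v : Fin (N + 1) → κ} (hv0 : v ≠ 0)
    (hv : ∀ f ∈ vanishingIdeal ℂ (cone X), aeval v f = 0) :
    ∃ p : Fin c → MvPolynomial (Fin (N + 1)) ℂ, (∀ a, p a ∈ vanishingIdeal ℂ (cone X)) ∧
      ∃ Λ : Matrix (Fin c) (Fin (N + 1)) ℂ, aeval v (frameDet p Λ) ≠ 0 := by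
  by_contra! hcon
  apply hv0
  set I : Ideal (MvPolynomial (Fin (N + 1)) ℂ) := vanishingIdeal ℂ (cone X) ⊔ Ideal.span
    {f | ∃ p : Fin c → MvPolynomial (Fin (N + 1)) ℂ, (∀ a, p a ∈ vanishingIdeal ℂ (cone X)) ∧
      ∃ Λ, frameDet p Λ = f} with hI
  have hker : I ≤ RingHom.ker (aeval v : MvPolynomial (Fin (N + 1)) ℂ →ₐ[ℂ] κ) := by
    refine sup_le (fun f hf => hv f hf) (Ideal.span_le.2 ?_)
    rintro _ ⟨p, hp, Λ, rfl⟩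
    exact hcon p hp Λ
  have hzero : ∀ y ∈ zeroLocus ℂ I, y = 0 := by
    intro y hy
    rw [mem_zeroLocus'] at hy
    by_contra hy0
    have hyX : y ∈ cone X := by
      rw [← zeroLocus_vanishingIdeal hX.1, mem_zeroLocus']
      exact fun f hf => hy f (Ideal.mem_sup_left hf)
    obtain ⟨p, hp, Λ, h1⟩ := frame_at hX hc hyX hy0
    rw [hy _ (Ideal.mem_sup_right (Ideal.subset_span ⟨p, hp, Λ, rfl⟩))] at h1
    exact zero_ne_one h1
  ext k
  have h1 : (MvPolynomial.X k : MvPolynomial (Fin (N + 1)) ℂ) ∈ I.radical := by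
    rw [← vanishingIdeal_zeroLocus_eq_radical (K := ℂ), mem_vanishingIdeal']
    intro y hy
    simp [hzero y hy]
  obtain ⟨m, hm⟩ := h1
  have h2 := hker hm
  rw [RingHom.mem_ker, map_pow, aeval_X] at h2
  exact eq_zero_of_pow_eq_zero h2

/-- At a nonzero point of the contact locus over an extension field, a vector tangent to the cone
lies in the specialized hyperplane. -/
theorem Contact.tangent_hyperplane {K : Type} [Field K] [Algebra ℂ K] {κ : Type} [Field κ]
    [Algebra ℂ κ] {X : Set (Proj N)} {n c : ℕ}
    (hX : SmoothVariety X n) (hc : c + n = N) {x : Fin (N + 1) → K} {t : Fin c → K}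
    {q : Fin (n + 1) → MvPolynomial (Fin (N + 1)) ℂ} (hx : IsGeneric (cone X) x)
    (hq : AlgebraicIndependent ℂ fun k => aeval x (q k))
    {p : Fin c → MvPolynomial (Fin (N + 1)) ℂ} (hp : ∀ a, p a ∈ vanishingIdeal ℂ (cone X))
    (Ct : Contact x (conormal p x t)) (φ : Ct.Rs →ₐ[ℂ] ℂ) {u : {j // j ∉ Ct.T} → κ}
    (hu : Ct.lin φ u ≠ 0) {l : Fin (N + 1) → κ}
    (hl : ∀ f ∈ vanishingIdeal ℂ (cone X), ∑ i, aeval (Ct.lin φ u) (pderiv i f) * l i = 0) :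
    ∑ i, algebraMap ℂ κ (φ (Ct.h' i)) * l i = 0 := by
  have hI : ∀ f ∈ vanishingIdeal ℂ (cone X), aeval x f = 0 :=
    fun f hf => (hx f).2 (mem_vanishingIdeal'.1 hf)
  obtain ⟨p', hp', Λ, hΛ⟩ := exists_frame hX hc hu fun f hf => Ct.aeval_lin_eq_zero φ u (hI f hf)
  have hΛx : aeval x (frameDet p' Λ) ≠ 0 := fun h => hΛ (Ct.aeval_lin_eq_zero φ u h)
  choose μ hμ using fun a => exists_coeff_grad hc hx hq hp' hΛx (hp a)
  have hh : conormal p x t = (grad p' x).mulVec (fun b => ∑ a, t a * μ a b) := by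
    ext i
    simp only [conormal, Matrix.mulVec, dotProduct, Finset.mul_sum]
    rw [Finset.sum_comm]
    refine Finset.sum_congr rfl fun a _ => ?_
    rw [grad, Matrix.of_apply, hμ, Finset.mul_sum]
    exact Finset.sum_congr rfl fun b _ => by ring
  set h0 : Fin (N + 1) → κ := fun i => algebraMap ℂ κ (φ (Ct.h' i)) with hh0
  have key : cramerDefect p' Λ (Ct.lin φ u) h0 = 0 := by
    ext i
    have h1 := Ct.aeval_lin φ u (cramerDefect p' Λ (fun k => MvPolynomial.X (Sum.inl k))
      (fun k => MvPolynomial.X (Sum.inr k)) i) ?_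
    · rw [map_cramerDefect] at h1
      simpa [Function.comp_def] using h1
    · rw [map_cramerDefect]
      simp only [Function.comp_def, aeval_X, Sum.elim_inl, Sum.elim_inr]
      have := cramerDefect_mulVec p' Λ x (fun b => ∑ a, t a * μ a b)
      rw [← hh] at this
      exact congrFun this i
  rw [aeval_frameDet] at hΛ
  set δ := (Λ.map (algebraMap ℂ κ) * grad p' (Ct.lin φ u)).det
  set ν := (Λ.map (algebraMap ℂ κ) * grad p' (Ct.lin φ u)).adjugate.mulVec
    ((Λ.map (algebraMap ℂ κ)).mulVec h0) with hν
  have h2 : ∀ i, δ * h0 i = ∑ a, grad p' (Ct.lin φ u) i a * ν a :=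
    fun i => sub_eq_zero.1 (congrFun key i)
  refine (mul_eq_zero.1 (?_ : δ * ∑ i, h0 i * l i = 0)).resolve_left hΛ
  simp only [Finset.mul_sum, ← mul_assoc, h2, Finset.sum_mul]
  rw [Finset.sum_comm]
  refine Finset.sum_eq_zero fun a _ => ?_
  rw [← mul_zero (ν a), ← hl _ (hp' a), Finset.mul_sum]
  refine Finset.sum_congr rfl fun i _ => ?_
  rw [grad, Matrix.of_apply]
  ring

end DefectSum

/-! ### Taylor expansion and places -/

namespace DefectSum

variable {N : ℕ} {K : Type} [Field K] [Algebra ℂ K]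

/-- First-order Taylor expansion of a polynomial along `ε`. -/
theorem taylor {B σ : Type} [CommRing B] [Algebra ℂ B] [Fintype σ] (a b : σ → B) (ε : B)
    (p : MvPolynomial σ ℂ) :
    ∃ r, aeval (a + ε • b) p = aeval a p + ε * ∑ i, aeval a (pderiv i p) * b i + ε ^ 2 * r := by
  classical
  induction p using MvPolynomial.induction_on with
  | C z => exact ⟨0, by simp⟩
  | add p q hp hq =>
    obtain ⟨r, hr⟩ := hp
    obtain ⟨r', hr'⟩ := hq
    refine ⟨r + r', ?_⟩
    simp only [map_add, hr, hr', add_mul, Finset.sum_add_distrib]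
    ring
  | mul_X p j hp =>
    obtain ⟨r, hr⟩ := hp
    have h1 : ∑ i, aeval a (pderiv i (p * X j)) * b i =
        a j * ∑ i, aeval a (pderiv i p) * b i + aeval a p * b j := by
      simp only [Derivation.leibniz, pderiv_X, smul_eq_mul, map_add, map_mul, aeval_X, add_mul,
        Finset.sum_add_distrib, Finset.mul_sum]
      rw [add_comm]
      congr 1
      · exact Finset.sum_congr rfl fun i _ => by ring
      · rw [Finset.sum_eq_single j]
        · simp
        · intro i _ hi; simp [Pi.single_apply, hi.symm]
        · simp
    refine ⟨(∑ i, aeval a (pderiv i p) * b i) * b j + r * a j + ε * r * b j, ?_⟩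
    rw [h1, map_mul, map_mul, aeval_X, aeval_X, hr, Pi.add_apply, Pi.smul_apply, smul_eq_mul]
    ring

theorem mem_acl_of_isIntegral {S : Set K} {a : K} (ha : IsIntegral (acl S) a) : a ∈ acl S := by
  have h1 : a ∈ acl (acl S : Set K) := by
    rw [mem_acl']
    have h2 : IsAlgebraic (acl S) a := ha.isAlgebraic
    have h3 : Algebra.adjoin ℂ (acl S : Set K) = (acl S).toSubalgebra :=
      Algebra.adjoin_eq (acl S).toSubalgebra
    rw [h3]
    exact h2
  exact acl_le (S := S) (T := acl S) (fun _ h => h) h1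

/-- If one of the `x j` is transcendental over `S`, there is a valuation ring `O` of `K`, recorded
here as a local domain with an embedding `ι` into `K`, that contains the relative algebraic closure
of `S` and has an element `ε` of its maximal ideal for which `w = ε x` has coordinates in `O`, one of
them equal to `1`. -/
theorem exists_place {S : Set K} {J : Type} [Finite J] {x : J → K} (hx : ∃ j, x j ∉ acl S) :
    ∃ (O : Type) (_ : CommRing O) (_ : IsDomain O) (_ : IsLocalRing O) (_ : Algebra ℂ O)
      (ι : O →ₐ[ℂ] K), Function.Injective ι ∧ (∀ a ∈ acl S, ∃ b, ι b = a) ∧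
      ∃ ε : O, ε ≠ 0 ∧ ¬ IsUnit ε ∧ ∃ w : J → O, (∃ j, w j = 1) ∧ ∀ j, ι (w j) = ι ε * x j := by
  obtain ⟨j, hj⟩ := hx
  obtain ⟨O, hSO, hjO⟩ : ∃ O : ValuationSubring K, (acl S : Set K) ⊆ O.toSubring ∧ x j ∉ O := by
    by_contra! hcon
    apply hj
    have h1 : x j ∈ (⨅ V : {V : ValuationSubring K // (acl S : Set K) ⊆ V.toSubring},
        V.1.toSubring) := by
      rw [Subring.mem_iInf]
      exact fun V => hcon V.1 V.2
    rw [iInf_valuationSubring_superset] at h1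
    have h2 : IsIntegral (Subring.closure (acl S : Set K)) (x j) := h1
    have h3 : Subring.closure (acl S : Set K) = (acl S).toSubalgebra.toSubring :=
      Subring.closure_eq (acl S).toSubalgebra.toSubring
    rw [h3] at h2
    exact mem_acl_of_isIntegral h2
  let A : Subalgebra ℂ K :=
    { O.toSubring with algebraMap_mem' := fun z => hSO ((acl S).algebraMap_mem z) }
  have hAO : ∀ a, a ∈ A ↔ a ∈ O := fun a => Iff.rfl
  have hloc : IsLocalRing A := (inferInstance : IsLocalRing O)
  have : Nonempty J := ⟨j⟩
  obtain ⟨m, hm⟩ := Finite.exists_max (fun i => O.valuation (x i))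
  have hm1 : 1 < O.valuation (x m) := by
    refine lt_of_lt_of_le ?_ (hm j)
    rw [← not_le, O.valuation_le_one_iff]
    exact hjO
  have hxm : x m ≠ 0 := by
    intro h0; rw [h0, map_zero] at hm1; exact absurd hm1 (by simp)
  have hval : ∀ i, (x m)⁻¹ * x i ∈ O := by
    intro i
    rw [← O.valuation_le_one_iff, map_mul, map_inv₀]
    have h0 : O.valuation (x m) ≠ 0 := (map_ne_zero _).2 hxm
    rw [inv_mul_le_iff₀ (zero_lt_iff.2 h0), mul_one]
    exact hm i
  have hε : (x m)⁻¹ ∈ O := by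
    rw [← O.valuation_le_one_iff, map_inv₀]
    exact inv_le_one_of_one_le₀ hm1.le
  refine ⟨A, inferInstance, inferInstance, hloc, inferInstance, A.val, Subtype.val_injective,
    fun a ha => ⟨⟨a, hSO ha⟩, rfl⟩, ⟨(x m)⁻¹, hε⟩, ?_, ?_, fun i => ⟨(x m)⁻¹ * x i, hval i⟩,
    ⟨m, ?_⟩, fun i => rfl⟩
  · intro h
    exact inv_ne_zero hxm (congrArg Subtype.val h)
  · intro h
    obtain ⟨b, hb⟩ := h.exists_right_inv
    have h1 : (x m)⁻¹ * (b : K) = 1 := congrArg Subtype.val hb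
    have h2 : x m ∈ O := by
      have : x m = (b : K) := by field_simp at h1; exact h1.symm
      rw [this]; exact b.2
    rw [← O.valuation_le_one_iff] at h2
    exact absurd h2 (not_le.2 hm1)
  · exact Subtype.ext (inv_mul_cancel₀ hxm)

end DefectSum

/-! ### Finiteness of the projection from a contact locus -/

namespace DefectSum

variable {N : ℕ} {K : Type} [Field K] [Algebra ℂ K]

/-- Multiples of a generic point of a cone satisfy the equations of the cone. -/
theorem aeval_smul_generic {X : Set (Proj N)} {x : Fin (N + 1) → K} (hx : IsGeneric (cone X) x)
    (hV : ∃ v ∈ cone X, v ≠ 0) (ε : K) {f : MvPolynomial (Fin (N + 1)) ℂ}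
    (hf : f ∈ vanishingIdeal ℂ (cone X)) : aeval (ε • x) f = 0 := by
  set Q : MvPolynomial (Unit ⊕ Fin (N + 1)) ℂ :=
    aeval (fun i => MvPolynomial.X (Sum.inl ()) * MvPolynomial.X (Sum.inr i)) f with hQ
  have key : ∀ {B : Type} [CommRing B] [Algebra ℂ B] (t : Unit → B) (x : Fin (N + 1) → B),
      aeval (Sum.elim t x) Q = aeval (t () • x) f := by
    intro B _ _ t x
    rw [hQ, ← AlgHom.comp_apply, comp_aeval]
    congr 2
    ext i
    simp
  rw [← key (fun _ => ε) x]
  refine aeval_eq_zero_of_generic hx hV _ Q fun v hv _ w => ?_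
  rw [eval_eq_aeval, key, ← eval_eq_aeval]
  exact mem_vanishingIdeal'.1 hf _ (smul_mem_cone hv _)

/-- Non-degeneracy: no nonzero complex linear form vanishes at the generic point. -/
theorem sum_mul_ne_zero {X : Set (Proj N)} (hnd : Nondeg X) {x : Fin (N + 1) → K}
    (hx : IsGeneric (cone X) x) {a : Aff N} (ha : a ≠ 0) : ∑ i, algebraMap ℂ K (a i) * x i ≠ 0 := by
  intro h0
  apply ha
  have h1 := (hx (∑ i, C (a i) * MvPolynomial.X i)).1 (by simpa using h0)
  have h2 : Submodule.span ℂ (cone X) ≤ hypSub a := by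
    rw [Submodule.span_le]
    intro v hv
    have := h1 v hv
    simpa [hypSub] using this
  rw [show Submodule.span ℂ (cone X) = ⊤ from hnd] at h2
  ext i
  have h3 := h2 (Submodule.mem_top (x := (Pi.single i 1 : Aff N)))
  simpa [hypSub, Pi.single_apply] using h3

namespace Contact

/-- The difference between the generic point of `X` and the point with the same affine coordinates
in the contact locus of a specialized hyperplane. -/
noncomputable def ell {x h : Fin (N + 1) → K} (Ct : Contact x h) (φ : Ct.Rs →ₐ[ℂ] ℂ)
    (k : Fin (N + 1)) : K :=
  x k - Ct.lin φ (fun j => x j) k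

/-- The projection of `X` from the contact locus of a tangent hyperplane is generically finite:
otherwise a curve in a fibre would meet the contact locus, and the tangent direction there would be
forced into the hyperplane. -/
theorem coord_mem_acl {X : Set (Proj N)} {n c : ℕ} (hX : SmoothVariety X n) (hnd : Nondeg X)
    (hV : ∃ v ∈ cone X, v ≠ 0) (hc : c + n = N) {x : Fin (N + 1) → K} {t : Fin c → K}
    {q : Fin (n + 1) → MvPolynomial (Fin (N + 1)) ℂ} (hx : IsGeneric (cone X) x)
    (hq : AlgebraicIndependent ℂ fun k => aeval x (q k))
    {p : Fin c → MvPolynomial (Fin (N + 1)) ℂ} (hp : ∀ a, p a ∈ vanishingIdeal ℂ (cone X))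
    (Ct : Contact x (conormal p x t)) (φ : Ct.Rs →ₐ[ℂ] ℂ) (hφ : ∃ i, φ (Ct.h' i) ≠ 0)
    (k : Fin (N + 1)) : x k ∈ acl (Set.range (Ct.ell φ)) := by
  have hxk : ∀ k, x k = Ct.ell φ k + Ct.lin φ (fun j => x j) k := fun k => by simp [ell]
  have hellE : ∀ k, Ct.ell φ k ∈ acl (Set.range (Ct.ell φ)) := fun k => subset_acl _ ⟨k, rfl⟩
  suffices h : ∀ j : {j // j ∉ Ct.T}, x j ∈ acl (Set.range (Ct.ell φ)) by
    rw [hxk k]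
    refine add_mem (hellE k) (sum_mem fun j _ => mul_mem ?_ (h j))
    exact (acl (Set.range (Ct.ell φ))).algebraMap_mem _
  by_contra! hcon
  obtain ⟨O, _, _, _, _, ι, hι, hE, ε, hε0, hεu, w, ⟨m, hm⟩, hw⟩ := exists_place hcon
  choose b hb using fun k => hE _ (hellE k)
  have hιv : ∀ k, ι (Ct.lin φ w k) = ι ε * Ct.lin φ (fun j => x j) k := by
    intro k
    simp only [lin, map_sum, map_mul, AlgHom.commutes, hw, Finset.mul_sum]
    exact Finset.sum_congr rfl fun j _ => by ring
  have hx0 : ι ∘ (Ct.lin φ w + ε • b) = ι ε • x := by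
    ext k
    simp only [Function.comp_apply, Pi.add_apply, Pi.smul_apply, smul_eq_mul, map_add, map_mul, hιv,
      hb]
    rw [hxk k]; ring
  -- the first-order term of the Taylor expansion at `lin φ w` lies in the maximal ideal
  have htay : ∀ f ∈ vanishingIdeal ℂ (cone X),
      ¬ IsUnit (∑ i, aeval (Ct.lin φ w) (pderiv i f) * b i) := by
    intro f hf hunit
    obtain ⟨r, hr⟩ := taylor (Ct.lin φ w) b ε f
    have h1 : aeval (Ct.lin φ w + ε • b) f = 0 := by
      apply hι
      rw [map_zero, ← AlgHom.comp_apply, comp_aeval, ← aeval_smul_generic hx hV (ι ε) hf, ← hx0]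
      rfl
    rw [h1, Ct.aeval_lin_eq_zero φ w ((hx f).2 (mem_vanishingIdeal'.1 hf)), zero_add] at hr
    have h2 : ε * ((∑ i, aeval (Ct.lin φ w) (pderiv i f) * b i) + ε * r) = 0 := by
      rw [hr]; ring
    have h3 := (mul_eq_zero.1 h2).resolve_left hε0
    rw [eq_neg_of_add_eq_zero_left h3, IsUnit.neg_iff] at hunit
    exact hεu (isUnit_of_mul_isUnit_left hunit)
  let κ := IsLocalRing.ResidueField O
  let ρ : O →ₐ[ℂ] κ := IsScalarTower.toAlgHom ℂ O κ
  have hρ : ∀ a, ρ a = 0 ↔ ¬ IsUnit a := fun a => IsLocalRing.residue_eq_zero_iff a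
  have hρlin : Ct.lin φ (ρ ∘ w) = ρ ∘ Ct.lin φ w := by
    ext k
    simp [lin]
  have h1 : ∑ i, algebraMap ℂ κ (φ (Ct.h' i)) * ρ (b i) = 0 := by
    refine Ct.tangent_hyperplane hX hc hx hq hp φ (u := ρ ∘ w) (l := ρ ∘ b) ?_ ?_
    · intro h0
      have := congrFun h0 m
      rw [lin_self, Function.comp_apply, hm, map_one] at this
      exact one_ne_zero this
    · intro f hf
      have h2 := (hρ _).2 (htay f hf)
      rw [map_sum] at h2
      rw [← h2]
      refine Finset.sum_congr rfl fun i _ => ?_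
      rw [map_mul, ← AlgHom.comp_apply, comp_aeval, hρlin]
      rfl
  set e : O := ∑ i, algebraMap ℂ O (φ (Ct.h' i)) * b i with he
  have h2 : ¬ IsUnit e := by
    rw [← hρ, he, map_sum]
    simpa using h1
  have hιe : ι e = ∑ i, algebraMap ℂ K (φ (Ct.h' i)) * Ct.ell φ i := by
    simp [he, hb]
  have hne : ι e ≠ 0 := by
    have h3 := Ct.sum_h_lin (sum_conormal_mul t hx hp) φ (fun j => x j)
    have h4 := sum_mul_ne_zero hnd hx (a := fun i => φ (Ct.h' i))
      (fun h => hφ.elim fun i hi => hi (congrFun h i))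
    rw [hιe]
    simp only [ell, mul_sub, Finset.sum_sub_distrib, h3, sub_zero]
    exact h4
  have heE : ι e ∈ acl (Set.range (Ct.ell φ)) := by
    rw [hιe]
    exact sum_mem fun i _ => mul_mem ((acl _).algebraMap_mem _) (hellE i)
  obtain ⟨e', he'⟩ := hE _ (inv_mem heE)
  apply h2
  refine IsUnit.of_mul_eq_one e' (hι ?_)
  rw [map_mul, he', map_one, mul_inv_cancel₀ hne]

end Contact
end DefectSum

/-! ### The join with a contact locus -/

namespace DefectSum

variable {N : ℕ} {K : Type} [Field K] [Algebra ℂ K]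

namespace Contact

variable {x h : Fin (N + 1) → K}

theorem ell_self (Ct : Contact x h) (φ : Ct.Rs →ₐ[ℂ] ℂ) (j : {j // j ∉ Ct.T}) :
    Ct.ell φ j = 0 := by
  rw [ell, lin_self, sub_self]

/-- Evaluation at the generic point of the join of `X` with the contact locus of a specialized
hyperplane. -/
noncomputable def joinHom (Ct : Contact x h) (φ : Ct.Rs →ₐ[ℂ] ℂ) :
    MvPolynomial (Fin (N + 1)) ℂ →ₐ[ℂ] MvPolynomial {j // j ∉ Ct.T} K :=
  aeval fun k => C (Ct.ell φ k) + Ct.lin φ X k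

open Pointwise in
/-- The join of `X` with a contact locus is part of the secant variety, because the contact locus lies
in `X`. -/
theorem zeroLocus_joinHom {X : Set (Proj N)} (Ct : Contact x h) (φ : Ct.Rs →ₐ[ℂ] ℂ)
    (hX : zClosed (cone X)) (hx : IsGeneric (cone X) x) (hV : ∃ v ∈ cone X, v ≠ 0) {C : Set (Aff N)}
    (hC : zClosed C) (hXC : cone X + cone X ⊆ C) :
    zeroLocus ℂ (RingHom.ker (Ct.joinHom φ)) ⊆ C := by
  rw [← zeroLocus_vanishingIdeal hC]
  intro v hv
  rw [mem_zeroLocus'] at hv ⊢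
  intro f hf
  apply hv
  rw [RingHom.mem_ker]
  set Q : MvPolynomial ({j // j ∉ Ct.T} ⊕ Fin (N + 1)) ℂ :=
    aeval (fun k => MvPolynomial.X (Sum.inr k) +
      Ct.lin φ (fun j => MvPolynomial.X (Sum.inl j)) k) f with hQ
  have key : ∀ {B : Type} [CommRing B] [Algebra ℂ B] (w : {j // j ∉ Ct.T} → B)
      (x : Fin (N + 1) → B), aeval (Sum.elim w x) Q = aeval (x + Ct.lin φ w) f := by
    intro B _ _ w x
    rw [hQ, ← AlgHom.comp_apply, comp_aeval]
    congr 2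
    ext k
    simp [lin]
  have hx' : IsGeneric (cone X) (fun k => MvPolynomial.C (x k) : _ → MvPolynomial {j // j ∉ Ct.T} K) := by
    intro g
    rw [← hx g]
    have h1 : aeval (fun k => MvPolynomial.C (x k) : _ → MvPolynomial {j // j ∉ Ct.T} K) g =
        MvPolynomial.C (aeval x g) := by
      have := comp_aeval x (IsScalarTower.toAlgHom ℂ K (MvPolynomial {j // j ∉ Ct.T} K))
      exact (DFunLike.congr_fun this g).symm
    rw [h1, MvPolynomial.C_eq_zero]
  have h0 := aeval_eq_zero_of_generic hx' hV
    (fun j : {j // j ∉ Ct.T} => MvPolynomial.X j - MvPolynomial.C (x j)) Q ?_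
  · rw [key] at h0
    rw [← h0, joinHom]
    congr 2
    ext1 k
    simp only [ell, lin, Pi.add_apply, map_sub, map_sum, map_mul, mul_sub, Finset.sum_sub_distrib,
      MvPolynomial.algebraMap_apply]
    ring
  · intro v hv _ w
    rw [eval_eq_aeval, key, ← eval_eq_aeval]
    exact mem_vanishingIdeal'.1 hf _ (hXC (Set.add_mem_add hv (Ct.lin_mem φ hX hx w)))

theorem joinHom_X (Ct : Contact x h) (φ : Ct.Rs →ₐ[ℂ] ℂ) (k : Fin (N + 1)) :
    Ct.joinHom φ (X k) = C (Ct.ell φ k) + Ct.lin φ X k := by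
  rw [joinHom, aeval_X]

/-- When the projection from the contact locus is generically finite, the join with it has the expected
dimension: its generic point yields the independent functions `ell` and the `u j`, `j ∉ T`. -/
theorem le_adim_joinHom (Ct : Contact x h) (φ : Ct.Rs →ₐ[ℂ] ℂ) {n : ℕ} {f : Fin (n + 1) → K}
    (hf : AlgebraicIndependent ℂ f) (hfl : ∀ k, f k ∈ acl (Set.range (Ct.ell φ))) :
    ((n + 1 + (N + 1 - Ct.T.card) : ℕ) : WithBot ℕ∞) ≤
      adim (zeroLocus ℂ (RingHom.ker (Ct.joinHom φ))) := by
  obtain ⟨e, he⟩ := exists_independent_subfamily hf hfl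
  let τ : Fin (n + 1) ⊕ {j // j ∉ Ct.T} → MvPolynomial (Fin (N + 1)) ℂ :=
    Sum.elim (fun i => X (e i) - Ct.lin φ (fun j => X (j : Fin (N + 1))) (e i))
      (fun j => X (j : Fin (N + 1)))
  have hcard : Nat.card (Fin (n + 1) ⊕ {j // j ∉ Ct.T}) = n + 1 + (N + 1 - Ct.T.card) := by
    rw [Nat.card_sum, Nat.card_fin, Nat.card_eq_fintype_card, Fintype.card_subtype_compl]
    simp
  have hX : ∀ j : {j // j ∉ Ct.T}, Ct.joinHom φ (X j) = X j := by
    intro j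
    rw [joinHom_X, ell_self, lin_self, C_0, zero_add]
  rw [← hcard]
  refine card_le_adim (Ct.joinHom φ) τ ?_ subset_rfl
  have h1 := AlgebraicIndependent.sumElim_comp he (algebraicIndependent_X {j // j ∉ Ct.T} K)
  have h2 : (fun i => Ct.joinHom φ (τ i)) = Sum.elim X
      (algebraMap K (MvPolynomial {j // j ∉ Ct.T} K) ∘ Ct.ell φ ∘ e) ∘ Equiv.sumComm _ _ := by
    ext1 i
    rcases i with i | j
    · simp only [τ, Sum.elim_inl, map_sub, joinHom_X, Function.comp_apply, Equiv.sumComm_apply,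
        Sum.swap_inl, Sum.elim_inr]
      simp only [lin, map_sum, map_mul, hX, AlgHom.commutes, add_sub_cancel_right]
      rfl
    · simp [τ, hX]
  rw [h2]
  exact h1.comp _ (Equiv.injective _)

/-- The join is a cone with the contact locus in its vertex. -/
theorem add_lin_mem (Ct : Contact x h) (φ : Ct.Rs →ₐ[ℂ] ℂ) (u : {j // j ∉ Ct.T} → ℂ) {z : Aff N}
    (hz : z ∈ zeroLocus ℂ (RingHom.ker (Ct.joinHom φ))) :
    z + Ct.lin φ u ∈ zeroLocus ℂ (RingHom.ker (Ct.joinHom φ)) := by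
  rw [mem_zeroLocus'] at hz ⊢
  intro f hf
  have h1 : eval (z + Ct.lin φ u) f = eval z (aeval (fun k => X k + C (Ct.lin φ u k)) f) := by
    rw [eval_eq_aeval, eval_eq_aeval, ← AlgHom.comp_apply, comp_aeval]
    congr 2
    ext k
    simp
  rw [h1]
  apply hz
  rw [RingHom.mem_ker] at hf ⊢
  let σ : MvPolynomial {j // j ∉ Ct.T} K →ₐ[K] MvPolynomial {j // j ∉ Ct.T} K :=
    aeval fun j => X j + C (algebraMap ℂ K (u j))
  have h2 : (Ct.joinHom φ).comp (aeval fun k => X k + C (Ct.lin φ u k)) =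
      (σ.restrictScalars ℂ).comp (Ct.joinHom φ) := by
    ext1 k
    simp only [AlgHom.comp_apply, aeval_X, map_add, joinHom_X, AlgHom.restrictScalars_apply]
    rw [show (C (Ct.lin φ u k) : MvPolynomial (Fin (N + 1)) ℂ) = algebraMap ℂ _ _ from rfl,
      AlgHom.commutes, show σ (C (Ct.ell φ k)) = C (Ct.ell φ k) from algHom_C _ _, add_assoc]
    congr 1
    simp only [lin, map_sum, map_mul, ← Finset.sum_add_distrib]
    refine Finset.sum_congr rfl fun j _ => ?_
    have h3 : ∀ a : ℂ, σ (algebraMap ℂ _ a) = algebraMap ℂ _ a :=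
      fun a => (σ.restrictScalars ℂ).commutes a
    rw [h3, show σ (X j) = X j + C (algebraMap ℂ K (u j)) from aeval_X _ _, mul_add]
    rfl
  have h4 := DFunLike.congr_fun h2 f
  rw [AlgHom.comp_apply, AlgHom.comp_apply, hf, map_zero] at h4
  exact h4

/-- The parametrization of a contact locus by its affine coordinates, as a linear map. -/
noncomputable def linMap (Ct : Contact x h) (φ : Ct.Rs →ₐ[ℂ] ℂ) :
    ({j // j ∉ Ct.T} → ℂ) →ₗ[ℂ] Aff N where
  toFun := Ct.lin φ
  map_add' u v := by ext k; simp [lin, mul_add, Finset.sum_add_distrib]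
  map_smul' a u := by
    ext k
    simp only [lin, Pi.smul_apply, smul_eq_mul, Finset.mul_sum, RingHom.id_apply]
    exact Finset.sum_congr rfl fun j _ => by ring

/-- The contact loci span: a linear form vanishing on all of them vanishes at the generic point. -/
theorem iSup_range_linMap {X : Set (Proj N)} (hnd : Nondeg X) (hx : IsGeneric (cone X) x)
    (Ct : Contact x h) : ⨆ φ : Ct.Rs →ₐ[ℂ] ℂ, LinearMap.range (Ct.linMap φ) = ⊤ := by
  by_contra hcon
  obtain ⟨f, hf0, hf⟩ := Submodule.exists_le_ker_of_lt_top _ (lt_top_iff_ne_top.2 hcon)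
  have hfv : ∀ v : Aff N, f v = ∑ k, f (Pi.single k 1) * v k := by
    intro v
    conv_lhs => rw [pi_eq_sum_univ' v, map_sum]
    refine Finset.sum_congr rfl fun k _ => ?_
    rw [map_smul, smul_eq_mul, mul_comm]
  have hβ : ∀ j, ∑ k, f (Pi.single k 1) • Ct.β k j = 0 := by
    intro j
    apply Ct.eq_zero_of_forall
    intro φ
    have h1 : Ct.linMap φ (Pi.single j 1) ∈ LinearMap.ker f :=
      hf (le_iSup (fun φ => LinearMap.range (Ct.linMap φ)) φ ⟨_, rfl⟩)
    rw [LinearMap.mem_ker, hfv] at h1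
    rw [← h1, map_sum]
    refine Finset.sum_congr rfl fun k _ => ?_
    rw [map_smul, smul_eq_mul]
    congr 1
    simp [linMap, lin, Pi.single_apply]
  have ha : (fun k => f (Pi.single k 1)) ≠ 0 := by
    intro h0
    apply hf0
    refine LinearMap.ext fun v => ?_
    rw [hfv]
    exact Finset.sum_eq_zero fun k _ => by rw [show f (Pi.single k 1) = 0 from congrFun h0 k, zero_mul]
  apply sum_mul_ne_zero hnd hx ha
  have h2 : ∀ k, x k = ∑ j, (Ct.β k j : K) * x j := Ct.x_eq
  calc ∑ k, algebraMap ℂ K (f (Pi.single k 1)) * x k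
      = ∑ k, ∑ j : {j // j ∉ Ct.T}, algebraMap ℂ K (f (Pi.single k 1)) * ((Ct.β k j : K) * x j) := by
        refine Finset.sum_congr rfl fun k _ => ?_
        rw [← Finset.mul_sum, ← h2]
    _ = ∑ j : {j // j ∉ Ct.T}, (∑ k, f (Pi.single k 1) • Ct.β k j : Ct.Rs) * x j := by
        rw [Finset.sum_comm]
        refine Finset.sum_congr rfl fun j _ => ?_
        push_cast
        rw [Finset.sum_mul]
        refine Finset.sum_congr rfl fun k _ => ?_
        rw [Algebra.smul_def, mul_assoc]
    _ = 0 := by simp [hβ]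

end Contact
end DefectSum

/-! ### Translation invariance and the conclusion -/

namespace DefectSum

variable {N : ℕ}

theorem zClosed_translates {C : Set (Aff N)} (hC : zClosed C) (S : Set (Aff N)) :
    zClosed {v | ∀ w ∈ S, w + v ∈ C} := by
  have h1 : zClosure {v | ∀ w ∈ S, w + v ∈ C} = {v | ∀ w ∈ S, w + v ∈ C} := by
    refine Set.Subset.antisymm (fun v hv w hw => ?_) (subset_zClosure _)
    have h2 : {v | ∀ w ∈ S, w + v ∈ C} ⊆ {v : Aff N | w + v ∈ C} := fun u hu => hu w hw
    exact zClosure_min (zClosed_add C hC w) h2 hv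
  rw [← h1]
  exact zClosed_zClosure _

open Pointwise in
/-- The closure of the sum of an irreducible set with itself is irreducible. The closed condition
`w + v ∈ C₁` for all `w ∈ V` separates the two variables. -/
theorem zIrred_zClosure_add {V : Set (Aff N)} (hV : zIrred V) : zIrred (zClosure (V + V)) := by
  refine ⟨(hV.1.add hV.1).mono (subset_zClosure _), fun C₁ C₂ h₁ h₂ hC => ?_⟩
  have h := hV.2 _ _ (zClosed_translates h₁ V) (zClosed_translates h₂ V) ?_
  · refine h.imp (fun h => zClosure_min h₁ ?_) (fun h => zClosure_min h₂ ?_) <;>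
    · rintro _ ⟨w, hw, v, hv, rfl⟩
      exact h hv w hw
  · intro v hv
    refine (hV.2 _ _ (zClosed_add C₁ h₁ v) (zClosed_add C₂ h₂ v) ?_).imp ?_ ?_
    · intro w hw
      exact hC (subset_zClosure _ (Set.add_mem_add hv hw))
    · intro h w hw
      rw [add_comm]; exact h hw
    · intro h w hw
      rw [add_comm]; exact h hw

/-- A subset of the same finite dimension as an irreducible closed set is all of it: a maximal chain in
the subset could otherwise be extended. -/
theorem eq_of_adim_le {W C : Set (Aff N)} (hC : zClosed C) (hCi : zIrred C) (hWC : W ⊆ C) {m : ℕ}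
    (hW : (m : WithBot ℕ∞) ≤ adim W) (hCm : adim C = m) : W = C := by
  by_contra hne
  obtain ⟨l, hl⟩ := Order.le_krullDim_iff.1 hW
  let l' : LTSeries {V : Set (Aff N) // zClosed V ∧ zIrred V ∧ V ⊆ C} :=
    l.map (fun V => ⟨V.1, V.2.1, V.2.2.1, V.2.2.2.trans hWC⟩) (fun a b hab => hab)
  let l'' := l'.snoc ⟨C, hC, hCi, subset_rfl⟩ (by
    have h1 : l.last.1 ⊆ W := l.last.2.2.2
    have h2 : l.last.1 ⊂ C := (h1.trans hWC).ssubset_of_ne fun h =>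
      hne (hWC.antisymm (h ▸ h1))
    have h3 : l'.last.1 = l.last.1 := rfl
    exact (h3 ▸ h2 : l'.last.1 ⊂ C))
  have h4 := Order.LTSeries.length_le_krullDim l''
  rw [show Order.krullDim _ = adim C from rfl, hCm] at h4
  have h5 : l''.length = m + 1 := by rw [← hl]; rfl
  rw [h5] at h4
  have : m + 1 ≤ m := by exact_mod_cast h4
  omega

theorem zClosed_zero : zClosed ({0} : Set (Aff N)) := by
  refine ⟨Set.range MvPolynomial.X, ?_⟩
  ext v
  simp [funext_iff]

/-- A variety filling its ambient space has no tangent hyperplanes. -/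
theorem ne_of_dualVar {X : Set (Proj N)} {n nstar : ℕ} (hX : SmoothVariety X n)
    (hns : adim (cone (dualVar X)) = ((nstar + 1 : ℕ) : WithBot ℕ∞)) : n ≠ N := by
  rintro rfl
  obtain ⟨v, hv, hv0⟩ := exists_ne_zero_of_adim (zero_mem_cone _) hns
  have h1 : {h : Proj n | ∃ x ∈ X, projTangent X x ≤ hypSub h.rep} = ∅ := by
    rw [Set.eq_empty_iff_forall_notMem]
    rintro h ⟨x, hx, hle⟩
    have h2 : projTangent X x = ⊤ := by
      apply Submodule.eq_top_of_finrank_eq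
      rw [hX.2.2.2 x hx]; simp
    rw [h2] at hle
    apply h.rep_nonzero
    ext i
    have h3 := hle (Submodule.mem_top (x := (Pi.single i 1 : Aff n)))
    simpa [hypSub, Pi.single_apply] using h3
  rw [dualVar, h1, cone_pClosure] at hv
  refine hv0 (zClosure_min zClosed_zero ?_ hv)
  rintro w (⟨_, h⟩ | h)
  · exact h.elim
  · exact h

theorem le_of_smooth {X : Set (Proj N)} {n : ℕ} (hX : SmoothVariety X n) : n ≤ N := by
  obtain ⟨v, hv, hv0⟩ := exists_ne_zero_of_adim (zero_mem_cone _) hX.2.2.1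
  have h1 := finrank_tangentAt hX hv hv0
  have h2 := Submodule.finrank_le (tangentAt (cone X) v)
  rw [h1] at h2
  simpa using h2

theorem eq_univ_of_cone {X : Set (Proj N)} (h : cone X = Set.univ) : X = Set.univ := by
  rw [Set.eq_univ_iff_forall]
  intro z
  have h1 : z.rep ∈ cone X := by rw [h]; trivial
  rwa [mem_cone_of_ne z.rep_nonzero, Projectivization.mk_rep] at h1

/-- A Zariski-closed cone stable under translation by all contact loci is everything. -/
theorem eq_univ_of_add_mem {K : Type} [Field K] [Algebra ℂ K] {X : Set (Proj N)} (hnd : Nondeg X)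
    {x h : Fin (N + 1) → K} (hx : IsGeneric (cone X) x) (Ct : Contact x h) {C : Set (Aff N)}
    (h0 : 0 ∈ C) (hC : ∀ (φ : Ct.Rs →ₐ[ℂ] ℂ) u, ∀ z ∈ C, z + Ct.lin φ u ∈ C) : C = Set.univ := by
  rw [Set.eq_univ_iff_forall]
  intro v
  have hv : v ∈ ⨆ φ : Ct.Rs →ₐ[ℂ] ℂ, LinearMap.range (Ct.linMap φ) := by
    rw [Ct.iSup_range_linMap hnd hx]; trivial
  have h1 : ∀ z ∈ C, z + v ∈ C := by
    refine Submodule.iSup_induction _ (motive := fun v => ∀ z ∈ C, z + v ∈ C) hv ?_ ?_ ?_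
    · rintro φ _ ⟨u, rfl⟩
      exact hC φ u
    · intro z hz; rwa [add_zero]
    · intro a b ha hb z hz
      rw [← add_assoc]; exact hb _ (ha z hz)
  simpa using h1 0 h0

end DefectSum

/-- `df(X) + δ(X) ≤ n`, and `df(X) + δ(X) ≤ n - 1` when `SX ≠ ℙ^N`, stated
without subtraction: with `s = dim SX` and `n* = dim X*`, one has
`n + N ≤ n* + s`, and `n + N + 1 ≤ n* + s` when `SX ≠ ℙ^N`. -/
theorem defect_sum_bound {N n s nstar : ℕ} (X : Set (Proj N))
    (hX : SmoothVariety X n) (hnd : Nondeg X)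
    (hs : adim (cone (secantVar X)) = ((s + 1 : ℕ) : WithBot ℕ∞))
    (hns : adim (cone (dualVar X)) = ((nstar + 1 : ℕ) : WithBot ℕ∞)) :
    n + N ≤ nstar + s ∧ (secantVar X ≠ Set.univ → n + N + 1 ≤ nstar + s) := by
  have hnN : n < N := lt_of_le_of_ne (DefectSum.le_of_smooth hX) (DefectSum.ne_of_dualVar hX hns)
  obtain ⟨c, hc⟩ : ∃ c, c + n = N := ⟨N - n, by omega⟩
  have hV := DefectSum.exists_ne_zero_of_adim (DefectSum.zero_mem_cone X) hX.2.2.1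
  -- `x` is the generic point, `t` the coefficients of the generic conormal vector
  obtain ⟨K, _, _, x, t, q, hx, hind, htop⟩ := DefectSum.exists_generic hX c
  have hq : AlgebraicIndependent ℂ fun k => aeval x (q k) := hind.comp Sum.inr Sum.inr_injective
  obtain ⟨y, hy, hy0⟩ := hV
  obtain ⟨p, hp, Λ, hΛ⟩ := DefectSum.frame_at hX hc hy hy0
  have hΛx : aeval x (DefectSum.frameDet p Λ) ≠ 0 := by
    intro h0
    rw [(hx _).1 h0 y hy] at hΛ
    exact zero_ne_one hΛ
  have hV : ∃ v ∈ cone X, v ≠ 0 := ⟨y, hy, hy0⟩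
  obtain ⟨Ct⟩ := DefectSum.exists_contact_conormal hc (by omega) hx hind htop hp hΛx
  have hr := DefectSum.card_T_le_adim hx hV hp Ct
  rw [hns] at hr
  have hr' : Ct.T.card ≤ nstar + 1 := by exact_mod_cast hr
  have hTN : Ct.T.card ≤ N + 1 := by simpa using Finset.card_le_univ Ct.T
  have hsec := DefectSum.cone_secantVar hs
  have hsub : ∀ φ : Ct.Rs →ₐ[ℂ] ℂ,
      zeroLocus ℂ (RingHom.ker (Ct.joinHom φ)) ⊆ cone (secantVar X) := fun φ => by
    rw [hsec]
    exact Ct.zeroLocus_joinHom φ hX.1 hx hV (DefectSum.zClosed_zClosure _)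
      (DefectSum.subset_zClosure _)
  have hdim : ∀ φ : Ct.Rs →ₐ[ℂ] ℂ, ((n + 1 + (N + 1 - Ct.T.card) : ℕ) : WithBot ℕ∞) ≤
      adim (zeroLocus ℂ (RingHom.ker (Ct.joinHom φ))) := fun φ => by
    have hφ : ∃ i, φ (Ct.h' i) ≠ 0 := Ct.unit.imp fun i hi => (hi.map φ).ne_zero
    have hacl := Ct.coord_mem_acl hX hnd hV hc hx hq hp φ hφ
    exact Ct.le_adim_joinHom φ hq fun k => DefectSum.aeval_mem_intermediateField hacl _
  obtain ⟨φ₀, -⟩ := Ct.exists_specialization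
  have hle : n + 1 + (N + 1 - Ct.T.card) ≤ s + 1 := by
    have h1 := (hdim φ₀).trans (Order.krullDim_le_of_strictMono
      (fun V => (⟨V.1, V.2.1, V.2.2.1, V.2.2.2.trans (hsub φ₀)⟩ :
        {V // zClosed V ∧ zIrred V ∧ V ⊆ cone (secantVar X)})) fun a b hab => hab)
    rw [show Order.krullDim _ = adim (cone (secantVar X)) from rfl, hs] at h1
    exact_mod_cast h1
  refine ⟨by omega, fun hne => ?_⟩
  by_contra hlt
  -- equality forces the join of `X` with each contact locus to be the whole secant variety
  have heq : ∀ φ : Ct.Rs →ₐ[ℂ] ℂ,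
      zeroLocus ℂ (RingHom.ker (Ct.joinHom φ)) = cone (secantVar X) := fun φ => by
    have h1 : n + 1 + (N + 1 - Ct.T.card) = s + 1 := by omega
    refine DefectSum.eq_of_adim_le ?_ ?_ (hsub φ) (h1 ▸ hdim φ) hs
    · rw [hsec]; exact DefectSum.zClosed_zClosure _
    · rw [hsec]; exact DefectSum.zIrred_zClosure_add hX.2.1
  refine hne (DefectSum.eq_univ_of_cone (DefectSum.eq_univ_of_add_mem hnd hx Ct
    (DefectSum.zero_mem_cone _) fun φ u z hz => ?_))
  rw [← heq φ] at hz ⊢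
  exact Ct.add_lin_mem φ u hz
end

section
/- Let X ⊂ P^N be a non-degenerate n-dimensional scroll over a surface with δ(X) = 2 and SX ≠ P^N. Then for a general point w of the base surface W, dim S(F_w, X) = 2n − 2, where F_w is the fibre over w. -/
/-!
Write `C` for the affine cone over `X`, `F` for the linear subspace of a fibre, `J` for the Zariski
closure of `F + C` (the cone over `S(F_w, X)`) and `S` for the closure of `C + C` (the cone over
`SX`), an irreducible closed set of dimension `2n`. In fact `dim J = 2n - 1` for *every* fibre,
so the exceptional set can be taken empty.

*Upper bound.* `J ⊆ S`, so it is enough to see `J ≠ S`. Since `F + (F + C) = F + C`, the closure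
`J` is stable under translation by `F`. If `J = S`, then `S` contains the closure of
`F + (C + C)`, that is, `S` is stable under translation by `C`, hence by the span of `C`, which is
everything; this contradicts `SX ≠ ℙ^N` (`sumClosure_eq_univ`).

*Lower bound.* Choose another fibre, with linear subspace `G`. The two fibres are disjoint, so
`F + G ⊆ J` is a linear subspace of dimension `2(n - 1)`. If it were all of `J`, then `J`, being
linear and containing `C`, would be the whole space, and so would `S`. Hence the inclusion in the
irreducible closed set `J` is strict and `dim J ≥ 2n - 1`.

Both bounds use that the dimension drops strictly on proper subsets of an irreducible closed set
(`adim_add_one_le`).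
-/

open MvPolynomial

/-! ### The Zariski topology on affine space -/

theorem zClosed_sInter {N : ℕ} (T : Set (Set (Aff N))) (hT : ∀ C ∈ T, zClosed C) :
    zClosed (⋂₀ T) := by
  choose! I hI using hT
  refine ⟨⋃ C ∈ T, I C, ?_⟩
  ext x
  simp only [Set.mem_sInter, Set.mem_ofPred_eq, Set.mem_iUnion]
  constructor
  · rintro h p ⟨C, hC, hp⟩
    have := h C hC
    rw [hI C hC] at this
    exact this p hp
  · intro h C hC
    rw [hI C hC]
    exact fun p hp => h p ⟨C, hC, hp⟩

theorem zClosed_zClosure {N : ℕ} (V : Set (Aff N)) : zClosed (zClosure V) :=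
  zClosed_sInter _ fun _ h => h.1

theorem subset_zClosure {N : ℕ} (V : Set (Aff N)) : V ⊆ zClosure V :=
  fun _ hv _ hC => hC.2 hv

theorem zClosure_subset {N : ℕ} {V C : Set (Aff N)} (hC : zClosed C) (h : V ⊆ C) :
    zClosure V ⊆ C :=
  fun _ hv => hv C ⟨hC, h⟩

theorem zIrred.zClosure {N : ℕ} {V : Set (Aff N)} (h : zIrred V) : zIrred (zClosure V) := by
  refine ⟨h.1.mono (subset_zClosure V), fun C₁ C₂ h₁ h₂ hV => ?_⟩
  exact (h.2 C₁ C₂ h₁ h₂ ((subset_zClosure V).trans hV)).imp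
    (zClosure_subset h₁) (zClosure_subset h₂)

/-- Closed sets pull back to closed sets along affine maps `v ↦ c + a v`. -/
theorem zClosed.preimage_affine {N : ℕ} {C : Set (Aff N)} (hC : zClosed C) (c : Aff N) (a : ℂ) :
    zClosed {v | c + a • v ∈ C} := by
  obtain ⟨I, rfl⟩ := hC
  refine ⟨(fun p => bind₁ (fun i => MvPolynomial.C (c i) + MvPolynomial.C a * X i) p) '' I, ?_⟩
  have key : ∀ (v : Aff N) (p : MvPolynomial (Fin (N + 1)) ℂ),
      eval v (bind₁ (fun i => MvPolynomial.C (c i) + MvPolynomial.C a * X i :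
        Fin (N + 1) → MvPolynomial (Fin (N + 1)) ℂ) p) = eval (c + a • v) p := by
    intro v p
    induction p using MvPolynomial.induction_on with
    | C r => simp
    | add p q hp hq => simp [hp, hq]
    | mul_X p i hp => simp [hp]
  ext v
  simp [key]

theorem zClosed_submodule {N : ℕ} (P : Submodule ℂ (Aff N)) : zClosed (P : Set (Aff N)) := by
  refine ⟨(fun φ : Module.Dual ℂ (Aff N) =>
    ∑ i, MvPolynomial.C (φ (Pi.single i 1)) * X i) '' (P.dualAnnihilator : Set _), ?_⟩
  have key : ∀ (φ : Module.Dual ℂ (Aff N)) (x : Aff N),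
      eval x (∑ i, MvPolynomial.C (φ (Pi.single i 1)) * X i) = φ x := by
    intro φ x
    conv_rhs => rw [← Finset.univ_sum_single x, map_sum]
    rw [map_sum]
    refine Finset.sum_congr rfl fun i _ => ?_
    have : (Pi.single i (x i) : Aff N) = x i • Pi.single i 1 := by
      rw [← Pi.single_smul]; simp
    rw [this, map_smul]
    simp [mul_comm]
  ext x
  simp only [SetLike.mem_coe, Set.mem_ofPred_eq, Set.forall_mem_image, key]
  exact (Subspace.forall_mem_dualAnnihilator_apply_eq_zero_iff P x).symm

/-- A linear subspace is irreducible: two points not lying in the respective closed sets are joined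
by a line, and the product of the restrictions to this line of two separating polynomials would be
the zero polynomial in one variable. -/
theorem zIrred_submodule {N : ℕ} (P : Submodule ℂ (Aff N)) : zIrred (P : Set (Aff N)) := by
  refine ⟨⟨0, P.zero_mem⟩, ?_⟩
  rintro _ _ ⟨I₁, rfl⟩ ⟨I₂, rfl⟩ hP
  by_contra! h
  simp only [Set.not_subset, Set.mem_ofPred_eq, not_forall] at h
  obtain ⟨⟨p, hp, f, hf, hfp⟩, ⟨q, hq, g, hg, hgq⟩⟩ := h
  let L : Fin (N + 1) → Polynomial ℂ :=
    fun i => Polynomial.C (p i) + Polynomial.X * Polynomial.C (q i - p i)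
  have key : ∀ (t : ℂ) (r : MvPolynomial (Fin (N + 1)) ℂ),
      (aeval L r).eval t = eval (p + t • (q - p)) r := by
    intro t r
    induction r using MvPolynomial.induction_on with
    | C a => simp
    | add r s hr hs => simp [hr, hs]
    | mul_X r i hr => rw [map_mul, Polynomial.eval_mul, hr]; simp [L]
  have hz : aeval L f * aeval L g = 0 := by
    apply Polynomial.funext
    intro t
    have hm : p + t • (q - p) ∈ (P : Set (Aff N)) :=
      P.add_mem hp (P.smul_mem t (P.sub_mem hq hp))
    rw [Polynomial.eval_mul, key, key, Polynomial.eval_zero]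
    rcases hP hm with h | h
    · rw [h f hf, zero_mul]
    · rw [h g hg, mul_zero]
  rcases mul_eq_zero.1 hz with h | h
  · apply hfp
    have := key 0 f
    rw [h] at this
    simpa using this.symm
  · apply hgq
    have := key 1 g
    rw [h] at this
    simpa using this.symm

/-- The sum of two irreducible sets is irreducible. -/
theorem zIrred.add {N : ℕ} {A B : Set (Aff N)} (hA : zIrred A) (hB : zIrred B) :
    zIrred (Set.image2 (· + ·) A B) := by
  refine ⟨hA.1.image2 hB.1, fun C₁ C₂ h₁ h₂ h => ?_⟩
  -- `D C` is the set of those `a` for which the translate `a + B` lies in `C`.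
  let D : Set (Aff N) → Set (Aff N) := fun C => ⋂₀ ((fun b => {a | b + (1 : ℂ) • a ∈ C}) '' B)
  have hD : ∀ C, zClosed C → zClosed (D C) := by
    intro C hC
    apply zClosed_sInter
    rintro _ ⟨b, -, rfl⟩
    exact hC.preimage_affine b 1
  have memD : ∀ C a, a ∈ D C ↔ ∀ b ∈ B, a + b ∈ C := by
    intro C a
    simp [D, add_comm]
  have cov : A ⊆ D C₁ ∪ D C₂ := by
    intro a ha
    have := hB.2 _ _ (h₁.preimage_affine a 1) (h₂.preimage_affine a 1) (fun b hb => by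
      simpa using h (Set.mem_image2_of_mem ha hb))
    refine this.imp (fun h => (memD _ _).2 fun b hb => ?_) (fun h => (memD _ _).2 fun b hb => ?_)
    · simpa using h hb
    · simpa using h hb
  refine (hA.2 _ _ (hD _ h₁) (hD _ h₂) cov).imp (fun h => ?_) (fun h => ?_) <;>
  · rintro _ ⟨a, ha, b, hb, rfl⟩
    exact (memD _ _).1 (h ha) b hb

/-! ### Dimension -/

/-- Passing to a proper subset of an irreducible closed set lowers the dimension: any chain in the
subset extends by the ambient set. -/
theorem adim_add_one_le {N : ℕ} {V' V : Set (Aff N)} (hc : zClosed V) (hi : zIrred V)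
    (hsub : V' ⊆ V) (hne : V' ≠ V) : adim V' + 1 ≤ adim V := by
  unfold adim
  rcases isEmpty_or_nonempty {W : Set (Aff N) // zClosed W ∧ zIrred W ∧ W ⊆ V'} with h | h
  · rw [Order.krullDim_eq_bot]
    simp
  rw [← Order.krullDim_WithTop]
  let f : WithTop {W : Set (Aff N) // zClosed W ∧ zIrred W ∧ W ⊆ V'} →
      {W : Set (Aff N) // zClosed W ∧ zIrred W ∧ W ⊆ V} :=
    WithTop.recTopCoe ⟨V, hc, hi, subset_rfl⟩
      fun W => ⟨W.1, W.2.1, W.2.2.1, W.2.2.2.trans hsub⟩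
  refine Order.krullDim_le_of_strictMono f fun a b hab => ?_
  induction a using WithTop.recTopCoe with
  | top => exact absurd hab not_top_lt
  | coe a =>
    induction b using WithTop.recTopCoe with
    | top =>
      change a.1 < V
      exact a.2.2.2.trans_lt (hsub.lt_of_ne hne)
    | coe b =>
      have h : a < b := WithTop.coe_lt_coe.1 hab
      exact h

/-- A linear subspace has dimension at least its linear dimension, by a flag of subspaces. -/
theorem le_adim_submodule {N : ℕ} (k : ℕ) : ∀ P : Submodule ℂ (Aff N), Module.finrank ℂ P = k →
    (k : WithBot ℕ∞) ≤ adim (P : Set (Aff N)) := by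
  induction k with
  | zero =>
    intro P _
    have : Nonempty {W : Set (Aff N) // zClosed W ∧ zIrred W ∧ W ⊆ (P : Set (Aff N))} :=
      ⟨⟨P, zClosed_submodule P, zIrred_submodule P, subset_rfl⟩⟩
    exact Order.krullDim_nonneg
  | succ k ih =>
    intro P hP
    obtain ⟨v, hv⟩ := exists_linearIndependent_of_le_finrank
      (R := ℂ) (M := P) (n := k) (by omega)
    let Q : Submodule ℂ (Aff N) := (Submodule.span ℂ (Set.range v)).map P.subtype
    have hQ : Module.finrank ℂ Q = k := by
      rw [Submodule.finrank_map_subtype_eq, finrank_span_eq_card hv, Fintype.card_fin]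
    have hQP : Q ≤ P := Submodule.map_subtype_le _ _
    have hne : (Q : Set (Aff N)) ≠ P := by
      intro h
      have : Q = P := SetLike.coe_injective h
      rw [this] at hQ
      omega
    have := adim_add_one_le (zClosed_submodule P) (zIrred_submodule P) hQP hne
    refine le_trans ?_ this
    push_cast
    gcongr
    exact ih Q hQ

theorem adim_zero_le {N : ℕ} : adim ({0} : Set (Aff N)) ≤ 0 := by
  have : Subsingleton {W : Set (Aff N) // zClosed W ∧ zIrred W ∧ W ⊆ {0}} := by
    constructor
    rintro ⟨W, -, hW, hW'⟩ ⟨U, -, hU, hU'⟩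
    exact Subtype.ext (((hW.1.subset_singleton_iff).1 hW').trans
      ((hU.1.subset_singleton_iff).1 hU').symm)
  exact Order.krullDim_nonpos_of_subsingleton

/-! ### Affine cones -/

theorem smul_mem_cone {N : ℕ} {X : Set (Proj N)} {v : Aff N} (hv : v ∈ cone X) (a : ℂ) :
    a • v ∈ cone X := by
  by_cases h : a • v = 0
  · exact Or.inr h
  rcases hv with ⟨hv, hx⟩ | hv
  · refine Or.inl ⟨h, ?_⟩
    rwa [(Projectivization.mk_eq_mk_iff' ℂ _ _ h hv).2 ⟨a, rfl⟩]
  · exact absurd (by rw [Set.mem_singleton_iff.1 hv, smul_zero]) h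

theorem cone_mono {N : ℕ} {Y X : Set (Proj N)} (h : Y ⊆ X) : cone Y ⊆ cone X :=
  Set.union_subset_union_left _ fun _ ⟨hv, hy⟩ => ⟨hv, h hy⟩

theorem smul_mem_zClosure {N : ℕ} {A : Set (Aff N)} (hA : ∀ v ∈ A, ∀ a : ℂ, a • v ∈ A)
    {v : Aff N} (hv : v ∈ zClosure A) (a : ℂ) : a • v ∈ zClosure A := by
  have := zClosure_subset (V := A) ((zClosed_zClosure A).preimage_affine 0 a) (fun u hu => by
    simpa using subset_zClosure A (hA u hu a)) hv
  simpa using this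

theorem cone_pClosure {N : ℕ} (A : Set (Proj N)) : cone (pClosure A) = zClosure (cone A) := by
  ext v
  constructor
  · rintro (⟨hv, h⟩ | h)
    · obtain ⟨a, ha⟩ := Projectivization.exists_smul_eq_mk_rep ℂ v hv
      have h : (Projectivization.mk ℂ v hv).rep ∈ zClosure (cone A) := h
      rw [← ha] at h
      have := smul_mem_zClosure (fun u hu b => smul_mem_cone hu b) h (↑a⁻¹ : ℂ)
      rwa [← Units.smul_def, inv_smul_smul] at this
    · exact subset_zClosure _ (Or.inr h)
  · intro h
    by_cases hv : v = 0
    · exact Or.inr hv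
    refine Or.inl ⟨hv, ?_⟩
    obtain ⟨a, ha⟩ := Projectivization.exists_smul_eq_mk_rep ℂ v hv
    change (Projectivization.mk ℂ v hv).rep ∈ zClosure (cone A)
    rw [← ha]
    exact smul_mem_zClosure (fun u hu b => smul_mem_cone hu b) h (a : ℂ)

/-- The cone over the set of points of `ℙ(P)` is `P`. -/
theorem cone_submodule {N : ℕ} (P : Submodule ℂ (Aff N)) :
    cone {z : Proj N | z.submodule ≤ P} = P := by
  ext v
  constructor
  · rintro (⟨hv, h⟩ | h)
    · have h : (Projectivization.mk ℂ v hv).submodule ≤ P := h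
      rw [Projectivization.submodule_mk, Submodule.span_singleton_le_iff_mem] at h
      exact h
    · rw [Set.mem_singleton_iff.1 h]
      exact P.zero_mem
  · intro h
    by_cases hv : v = 0
    · exact Or.inr hv
    refine Or.inl ⟨hv, ?_⟩
    change (Projectivization.mk ℂ v hv).submodule ≤ P
    rwa [Projectivization.submodule_mk, Submodule.span_singleton_le_iff_mem]

theorem eq_univ_of_cone_eq_univ {N : ℕ} {A : Set (Proj N)} (h : cone A = Set.univ) :
    A = Set.univ := by
  rw [Set.eq_univ_iff_forall] at h ⊢
  intro z
  rcases h z.rep with ⟨hz, hA⟩ | h0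
  · rwa [Projectivization.mk_rep] at hA
  · exact absurd h0 z.rep_nonzero

/-- The cone over the join is the closure of the sum of the cones. Having two points in `X` makes
up for the condition `y ≠ x` in the definition of the join. -/
theorem cone_joinVar {N : ℕ} {Y X : Set (Proj N)} (hY : Y.Nonempty) (hX : X.Nontrivial) :
    cone (joinVar Y X) = zClosure (Set.image2 (· + ·) (cone Y) (cone X)) := by
  unfold joinVar
  rw [cone_pClosure]
  congr 1
  have memline : ∀ (v : Aff N) (hv : v ≠ 0) (y x : Proj N),
      Projectivization.mk ℂ v hv ∈ pline y x ↔ v ∈ y.submodule ⊔ x.submodule := by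
    intro v hv y x
    change (Projectivization.mk ℂ v hv).submodule ≤ _ ↔ _
    rw [Projectivization.submodule_mk, Submodule.span_singleton_le_iff_mem]
  have memcone : ∀ (A : Set (Proj N)) (y : Proj N), y ∈ A → ∀ v ∈ y.submodule, v ∈ cone A := by
    intro A y hy v hv
    rw [Projectivization.submodule_eq, Submodule.mem_span_singleton] at hv
    obtain ⟨a, rfl⟩ := hv
    refine smul_mem_cone (Or.inl ⟨y.rep_nonzero, ?_⟩) a
    rwa [Projectivization.mk_rep]
  ext v
  constructor
  · rintro (⟨hv, y, hy, x, hx, -, h⟩ | h)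
    · rw [memline, Submodule.mem_sup] at h
      obtain ⟨a, ha, b, hb, rfl⟩ := h
      exact ⟨a, memcone Y y hy a ha, b, memcone X x hx b hb, rfl⟩
    · exact ⟨0, Or.inr rfl, 0, Or.inr rfl, by simpa using (Set.mem_singleton_iff.1 h).symm⟩
  · rintro ⟨a, ha, b, hb, rfl⟩
    by_cases h0 : a + b = 0
    · exact Or.inr h0
    refine Or.inl ⟨h0, ?_⟩
    suffices h : ∃ y ∈ Y, ∃ x ∈ X, y ≠ x ∧ a + b ∈ y.submodule ⊔ x.submodule by
      obtain ⟨y, hy, x, hx, hne, h⟩ := h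
      exact ⟨y, hy, x, hx, hne, (memline _ _ _ _).2 h⟩
    -- If the sum already lies on one point `y` of `Y`, any line through `y` will do.
    have degenerate : ∀ y ∈ Y, a + b ∈ y.submodule →
        ∃ y ∈ Y, ∃ x ∈ X, y ≠ x ∧ a + b ∈ y.submodule ⊔ x.submodule := by
      intro y hy h
      obtain ⟨x, hx, hne⟩ := hX.exists_ne y
      exact ⟨y, hy, x, hx, hne.symm, Submodule.mem_sup_left h⟩
    have self_mem : ∀ (u : Aff N) (hu : u ≠ 0), u ∈ (Projectivization.mk ℂ u hu).submodule :=
      fun u hu => by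
        rw [Projectivization.submodule_mk]; exact Submodule.mem_span_singleton_self u
    rcases ha with ⟨ha0, ha⟩ | ha
    · rcases hb with ⟨hb0, hb⟩ | hb
      · by_cases hne : Projectivization.mk ℂ a ha0 = Projectivization.mk ℂ b hb0
        · exact degenerate _ ha (Submodule.add_mem _ (self_mem a ha0) (hne ▸ self_mem b hb0))
        · exact ⟨_, ha, _, hb, hne, Submodule.add_mem_sup (self_mem a ha0) (self_mem b hb0)⟩
      · refine degenerate _ ha ?_
        rw [Set.mem_singleton_iff.1 hb, add_zero]
        exact self_mem a ha0
    · obtain rfl : a = 0 := ha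
      rcases hb with ⟨hb0, hb⟩ | hb
      · obtain ⟨y, hy⟩ := hY
        have hm : 0 + b ∈ (Projectivization.mk ℂ b hb0).submodule := by
          rw [zero_add]; exact self_mem b hb0
        by_cases hne : y = Projectivization.mk ℂ b hb0
        · exact degenerate y hy (hne ▸ hm)
        · exact ⟨y, hy, _, hb, hne, Submodule.mem_sup_right hm⟩
      · exact absurd (by rw [Set.mem_singleton_iff.1 hb, add_zero]) h0

/-! ### Sums with a linear subspace -/

/-- If `C + C` lies in the Zariski closure of `F + C`, where `C` is a cone spanning the whole space and
`F` is a linear subspace, then `F + C` is dense: its closure is stable under translation by `F`, hence by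
`C`, hence by the span of `C`. -/
theorem sumClosure_eq_univ {N : ℕ} (F : Submodule ℂ (Aff N)) {C : Set (Aff N)}
    (h0 : (0 : Aff N) ∈ C) (hsmul : ∀ v ∈ C, ∀ a : ℂ, a • v ∈ C)
    (hspan : Submodule.span ℂ C = ⊤)
    (h : Set.image2 (· + ·) C C ⊆ zClosure (Set.image2 (· + ·) (F : Set (Aff N)) C)) :
    zClosure (Set.image2 (· + ·) (F : Set (Aff N)) C) = Set.univ := by
  set J := zClosure (Set.image2 (· + ·) (F : Set (Aff N)) C) with hJ
  have hJc : zClosed J := zClosed_zClosure _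
  have hF : ∀ f ∈ F, ∀ s ∈ J, f + s ∈ J := by
    intro f hf s hs
    have := zClosure_subset (hJc.preimage_affine f 1) (fun u hu => by
      obtain ⟨g, hg, c, hc, rfl⟩ := hu
      have : f + g + c ∈ J := subset_zClosure _ ⟨f + g, F.add_mem hf hg, c, hc, rfl⟩
      simpa [add_assoc] using this) hs
    simpa using this
  have hC : ∀ c ∈ C, ∀ s ∈ J, c + s ∈ J := by
    intro c hc s hs
    have := zClosure_subset (hJc.preimage_affine c 1) (fun u hu => by
      obtain ⟨f, hf, d, hd, rfl⟩ := hu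
      have : f + (c + d) ∈ J := hF f hf _ (h ⟨c, hc, d, hd, rfl⟩)
      simpa [add_left_comm] using this) hs
    simpa using this
  have hJs : ∀ s ∈ J, ∀ a : ℂ, a • s ∈ J := by
    intro s hs a
    refine smul_mem_zClosure ?_ hs a
    rintro _ ⟨f, hf, c, hc, rfl⟩ a
    exact ⟨a • f, F.smul_mem a hf, a • c, hsmul c hc a, (smul_add a f c).symm⟩
  have hJ0 : (0 : Aff N) ∈ J := subset_zClosure _ ⟨0, F.zero_mem, 0, h0, add_zero 0⟩
  rw [Set.eq_univ_iff_forall]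
  intro v
  have hv : v ∈ Submodule.span ℂ C := hspan ▸ Submodule.mem_top
  have key : ∀ s ∈ J, v + s ∈ J := by
    induction hv using Submodule.span_induction with
    | mem c hc => exact hC c hc
    | zero => intro s hs; rwa [zero_add]
    | add x y _ _ hx hy => intro s hs; rw [add_assoc]; exact hx _ (hy s hs)
    | smul a x _ hx =>
      intro s hs
      by_cases ha : a = 0
      · rwa [ha, zero_smul, zero_add]
      · have := hJs _ (hx _ (hJs s hs a⁻¹)) a
        rwa [smul_add, smul_inv_smul₀ ha] at this
  simpa using key 0 hJ0

/-- For a non-degenerate `n`-dimensional scroll over a smooth surface with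
`δ(X) = 2` and `SX ≠ ℙ^N`, the relative secant variety `S(F_w, X)` of a
general fibre has dimension `2n - 2` (cone dimension `2n - 1`). -/
theorem general_fibre_join_dim {N n : ℕ} (X : Set (Proj N))
    (hX : SmoothVariety X n) (hnd : Nondeg X) (S : ScrollOn N X n 2)
    (hdef : adim (cone (secantVar X)) = ((2 * n : ℕ) : WithBot ℕ∞))
    (hSX : secantVar X ≠ Set.univ) :
    ∃ Z : Set (Proj S.M), pClosed Z ∧ ¬ (S.W ⊆ Z) ∧
      ∀ w ∈ S.W, w ∉ Z →
        adim (cone (joinVar (S.fib w) X)) = ((2 * n - 1 : ℕ) : WithBot ℕ∞) := by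
  have hX2 : X.Nontrivial := by
    rw [← Set.not_subsingleton_iff]
    intro hs
    have hempty : {z | ∃ y ∈ X, ∃ x ∈ X, y ≠ x ∧ z ∈ pline y x} = (∅ : Set (Proj N)) := by
      ext z
      simp only [Set.mem_ofPred_eq, Set.mem_empty_iff_false, iff_false]
      rintro ⟨y, hy, x, hx, hne, -⟩
      exact hne (hs hy hx)
    have hle : adim (cone (secantVar X)) ≤ 0 := by
      refine le_trans (le_of_eq ?_) (adim_zero_le (N := N))
      unfold secantVar joinVar
      rw [hempty, cone_pClosure]
      congr 1
      have hc : cone (∅ : Set (Proj N)) = ((⊥ : Submodule ℂ (Aff N)) : Set (Aff N)) := by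
        ext v; simp [cone]
      rw [hc]
      exact (zClosure_subset (zClosed_submodule ⊥) subset_rfl).antisymm (subset_zClosure _)
    rw [hdef] at hle
    have h2 := S.dim_eq
    have : 2 * n ≤ 0 := by exact_mod_cast hle
    omega
  have fib_sub : ∀ w ∈ S.W, S.fib w ⊆ X := by
    intro w hw z hz
    rw [S.cover]
    exact Set.mem_biUnion hw hz
  have hsec : cone (secantVar X) = zClosure (Set.image2 (· + ·) (cone X) (cone X)) :=
    cone_joinVar hX2.nonempty hX2
  refine ⟨∅, ?_, ?_, ?_⟩
  · have hc : cone (∅ : Set (Proj S.M)) = ((⊥ : Submodule ℂ (Aff S.M)) : Set (Aff S.M)) := by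
      ext v; simp [cone]
    unfold pClosed
    rw [hc]
    exact zClosed_submodule ⊥
  · intro h
    obtain ⟨x, hx⟩ := hX2.nonempty
    rw [S.cover] at hx
    obtain ⟨w, hw, -⟩ := Set.mem_iUnion₂.1 hx
    exact h hw
  intro w hw _
  have hfibne : (S.fib w).Nonempty := by
    have hpos : 0 < Module.finrank ℂ (S.Fsub w) := by rw [S.fib_rank w hw]; omega
    have : Nontrivial (S.Fsub w) := Module.nontrivial_of_finrank_pos hpos
    obtain ⟨v, hv⟩ := exists_ne (0 : S.Fsub w)
    have hv0 : (v : Aff N) ≠ 0 := fun h => hv (Subtype.ext h)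
    refine ⟨Projectivization.mk ℂ (v : Aff N) hv0, ?_⟩
    change (Projectivization.mk ℂ (v : Aff N) hv0).submodule ≤ _
    rw [Projectivization.submodule_mk, Submodule.span_singleton_le_iff_mem]
    exact v.2
  have hfc : ∀ u, cone (S.fib u) = (S.Fsub u : Set (Aff N)) := fun u => cone_submodule _
  have hjoin : cone (joinVar (S.fib w) X) =
      zClosure (Set.image2 (· + ·) (S.Fsub w : Set (Aff N)) (cone X)) := by
    rw [cone_joinVar hfibne hX2, hfc]
  have hF_sub : ∀ u ∈ S.W, (S.Fsub u : Set (Aff N)) ⊆ cone X := fun u hu =>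
    hfc u ▸ cone_mono (fib_sub u hu)
  have hJS : cone (joinVar (S.fib w) X) ⊆ cone (secantVar X) := by
    rw [hjoin, hsec]
    exact zClosure_subset (zClosed_zClosure _)
      ((Set.image2_subset_right (hF_sub w hw)).trans (subset_zClosure _))
  have hJuniv : cone (joinVar (S.fib w) X) ≠ Set.univ := fun h =>
    hSX (eq_univ_of_cone_eq_univ (Set.univ_subset_iff.1 (h ▸ hJS)))
  have hsumC : cone X ⊆ cone (joinVar (S.fib w) X) := by
    intro c hc
    rw [hjoin]
    exact subset_zClosure _ ⟨0, (S.Fsub w).zero_mem, c, hc, zero_add c⟩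
  -- A linear subspace filling `J` contains the cone over `X`, hence is the whole space.
  have hlin : ∀ P : Submodule ℂ (Aff N), (P : Set (Aff N)) ≠ cone (joinVar (S.fib w) X) := by
    intro P hP
    have htop : (⊤ : Submodule ℂ (Aff N)) ≤ P := by
      rw [← show Submodule.span ℂ (cone X) = ⊤ from hnd, Submodule.span_le, hP]
      exact hsumC
    apply hJuniv
    rw [← hP, top_le_iff.1 htop]
    rfl
  have hupper : adim (cone (joinVar (S.fib w) X)) + 1 ≤ ((2 * n : ℕ) : WithBot ℕ∞) := by
    rw [← hdef]
    refine adim_add_one_le ?_ ?_ hJS ?_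
    · rw [hsec]; exact zClosed_zClosure _
    · rw [hsec]; exact (hX.2.1.add hX.2.1).zClosure
    · intro h
      apply hJuniv
      rw [hjoin]
      refine sumClosure_eq_univ (S.Fsub w) (Or.inr rfl) (fun v hv a => smul_mem_cone hv a) hnd ?_
      rw [← hjoin, h, hsec]
      exact subset_zClosure _
  -- There is a second fibre, since otherwise `J` is the linear subspace of the only fibre.
  obtain ⟨u, hu, huw⟩ : ∃ u ∈ S.W, u ≠ w := by
    by_contra! hall
    have hXF : cone X ⊆ (S.Fsub w : Set (Aff N)) := by
      rw [← hfc]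
      apply cone_mono
      intro z hz
      rw [S.cover] at hz
      obtain ⟨u, hu, hz⟩ := Set.mem_iUnion₂.1 hz
      exact hall u hu ▸ hz
    refine hlin (S.Fsub w) ((hF_sub w hw).trans hsumC |>.antisymm ?_)
    rw [hjoin]
    refine zClosure_subset (zClosed_submodule _) ?_
    rintro _ ⟨f, hf, c, hc, rfl⟩
    exact (S.Fsub w).add_mem hf (hXF hc)
  have hdisj : S.Fsub w ⊓ S.Fsub u = ⊥ := by
    rw [Submodule.eq_bot_iff]
    rintro v ⟨hv, hv'⟩
    by_contra hv0
    refine S.disjoint w hw u hu huw.symm (Projectivization.mk ℂ v hv0) ?_ ?_ <;>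
      rwa [Projectivization.submodule_mk, Submodule.span_singleton_le_iff_mem]
  have hrank : Module.finrank ℂ ↥(S.Fsub w ⊔ S.Fsub u) = 2 * (S.fdim + 1) := by
    have := Submodule.finrank_sup_add_finrank_inf_eq (S.Fsub w) (S.Fsub u)
    rw [hdisj, finrank_bot, S.fib_rank w hw, S.fib_rank u hu] at this
    omega
  have hlower : ((2 * (S.fdim + 1) : ℕ) : WithBot ℕ∞) + 1 ≤
      adim (cone (joinVar (S.fib w) X)) := by
    refine le_trans (add_le_add_left (le_adim_submodule _ _ hrank) 1) ?_
    refine adim_add_one_le ?_ ?_ ?_ (hlin _)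
    · rw [hjoin]; exact zClosed_zClosure _
    · rw [hjoin]; exact ((zIrred_submodule _).add hX.2.1).zClosure
    · intro v hv
      obtain ⟨a, ha, b, hb, rfl⟩ := Submodule.mem_sup.1 hv
      rw [hjoin]
      exact subset_zClosure _ ⟨a, ha, b, hF_sub u hu hb, rfl⟩
  have hn := S.dim_eq
  generalize adim (cone (joinVar (S.fib w) X)) = d at hupper hlower
  have e1 : 2 * n = (2 * n - 1) + 1 := by omega
  have e2 : 2 * (S.fdim + 1) + 1 = 2 * n - 1 := by omega
  refine le_antisymm ?_ ?_
  · rw [e1] at hupper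
    induction d using WithBot.recBotCoe with
    | bot => exact bot_le
    | coe d =>
      have h : d + 1 ≤ ((2 * n - 1 : ℕ) : ℕ∞) + 1 := WithBot.coe_le_coe.1 hupper
      exact WithBot.coe_le_coe.2 ((ENat.add_le_add_iff_right ENat.one_ne_top).1 h)
  · rw [← e2]
    exact_mod_cast hlower
end
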